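/- Let X be a stable set of functions on Ω, 𝒳 a stable ring on X, and μ : 𝒳 → L̄⁰₊ a stable set function satisfying (M1) and finite additivity (property (M2) for finite disjoint sequences). Then: (M3) μ(V|A ⊔ W|B) + μ(V|A ⊓ W|B) = μ(V|A) + μ(W|B) for all V|A, W|B ∈ 𝒳; (M4) μ(V|A) ≤ μ(W|B) whenever V|A ⊑ W|B; (M5) μ(W|B ⊓ (V|A)^⊏) = μ(W|B) − μ(V|A) whenever V|A ⊑ W|B and μ(V|A) < ∞ a.s.; (M6) if μ is a stable pre-measure, then μ(⊔_k V_k|A_k) ≤ ∑_k μ(V_k|A_k) for every sequence (V_k|A_k) in 𝒳 with ⊔_k V_k|A_k ∈ 𝒳; (M7) μ is a stable pre-measure if and only if μ(V_k|A_k) ↑ μ(⊔_k V_k|A_k) a.s. for every increasing sequence (V_k|A_k) in 𝒳 with ⊔_k V_k|A_k ∈ 𝒳; (M8) if μ(V|A) < ∞ a.s. for all V|A ∈ 𝒳, then μ is a stable pre-measure if and only if μ(V_k|A_k) ↓ μ(⊓_k V_k|A_k) a.s. for every decreasing sequence (V_k|A_k) in 𝒳 with ⊓_k V_k|A_k ∈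 𝒳. -/

import Mathlib

/-!
Common framework for conditional set theory and conditional measure theory
in the sense of Drapeau–Jamneshan–Karliczek–Kupper, specialized to the
measure algebra associated to a probability space `(Ω, F, P)`.

Functions on `Ω` are identified when they agree `P`-a.s., and measurable sets
are identified when their symmetric difference is a null set.  Conditional
subsets of a stable set `X` are represented by raw pairs `(V, A)` consisting of
a set of functions and a (measurable) base set; all notions are formulated with
respect to the almost-sure identifications via the relations `cle` and `ceq`.
-/

open MeasureTheory Filter Set Topology
open scoped ENNReal

noncomputable section

namespace CondMT

variable {Ω E F' : Type*}

/-- A countable partition of `Ω` into measurable sets (modulo `P`-null sets). -/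
structure Partition {Ω : Type*} (mΩ : MeasurableSpace Ω) (P : @Measure Ω mΩ) where
  part : ℕ → Set Ω
  meas : ∀ k, MeasurableSet[mΩ] (part k)
  disj : ∀ i j, i ≠ j → P (part i ∩ part j) = 0
  cover : P ((⋃ k, part k)ᶜ) = 0

variable {mΩ : MeasurableSpace Ω}

open Classical in
/-- The concatenation `∑ x_k|A_k` of a sequence of functions along a partition:
the (a.s. unique) function equal to `x_k` on `A_k` for every `k`. -/
def Partition.concat {P : @Measure Ω mΩ} (A : Partition mΩ P) (x : ℕ → Ω → E) : Ω → E :=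
  fun ω => if h : ∃ k, ω ∈ A.part k then x (Nat.find h) ω else x 0 ω

/-- A stable set of functions on `Ω`: nonempty, closed under a.s. modification and
closed under countable concatenations along partitions. -/
def Stable (P : @Measure Ω mΩ) (X : Set (Ω → E)) : Prop :=
  X.Nonempty ∧ (∀ x ∈ X, ∀ y, x =ᵐ[P] y → y ∈ X) ∧
    ∀ (A : Partition mΩ P) (x : ℕ → Ω → E), (∀ k, x k ∈ X) → A.concat x ∈ X

/-- Raw data of a conditional subset `V|A`: the carrier `V` and the base set `A`. -/
abbrev CondRaw (Ω E : Type*) := Set (Ω → E) × Set Ω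

/-- `S` represents a conditional subset of the stable set `X`: the carrier is a
stable subset of `X` and the base is measurable. -/
def IsCond (P : @Measure Ω mΩ) (X : Set (Ω → E)) (S : CondRaw Ω E) : Prop :=
  Stable P S.1 ∧ S.1 ⊆ X ∧ MeasurableSet[mΩ] S.2

/-- Conditional inclusion `V|A ⊑ W|B`: `A ⊆ B` a.s., and every `x|A`, `x ∈ V`,
coincides a.s. on `A` with some `y|A`, `y ∈ W`. -/
def cle (P : @Measure Ω mΩ) (S T : CondRaw Ω E) : Prop :=
  P (S.2 \ T.2) = 0 ∧ ∀ x ∈ S.1, ∃ y ∈ T.1, ∀ᵐ ω ∂P, ω ∈ S.2 → x ω = y ω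

/-- Identification of conditional subsets (equality in the conditional power set). -/
def ceq (P : @Measure Ω mΩ) (S T : CondRaw Ω E) : Prop := cle P S T ∧ cle P T S

/-- `x|C ∈ V|C`: the restriction of `x` to `C` agrees a.s. on `C` with an element of `V`. -/
def memOn (P : @Measure Ω mΩ) (C : Set Ω) (x : Ω → E) (V : Set (Ω → E)) : Prop :=
  ∃ y ∈ V, ∀ᵐ ω ∂P, ω ∈ C → x ω = y ω

/-- `∑ V_k|A_k`, the set of concatenations of sequences taken from the `V_k`. -/
def concatSet (P : @Measure Ω mΩ) (A : Partition mΩ P) (V : ℕ → Set (Ω → E)) :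
    Set (Ω → E) :=
  {f | ∃ x : ℕ → Ω → E, (∀ k, x k ∈ V k) ∧ f =ᵐ[P] A.concat x}

/-- Countable concatenation `∑ (V_k|B_k)|A_k := (∑ V_k|A_k)|⋃ (A_k ∩ B_k)` in the
conditional power set. -/
def condConcat (P : @Measure Ω mΩ) (A : Partition mΩ P) (S : ℕ → CondRaw Ω E) :
    CondRaw Ω E :=
  (concatSet P A fun k => (S k).1, ⋃ k, A.part k ∩ (S k).2)

/-- Restriction `(V|A)|B := V|(A ∩ B)`. -/
def crestrict (S : CondRaw Ω E) (B : Set Ω) : CondRaw Ω E := (S.1, S.2 ∩ B)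

/-- The degenerate conditional subset `X|∅ = {∗}`, the least element of `P(X)`. -/
def cbot (X : Set (Ω → E)) : CondRaw Ω E := (X, (∅ : Set Ω))

/-- The greatest element `X = X|Ω` of `P(X)`. -/
def ctop (X : Set (Ω → E)) : CondRaw Ω E := (X, (univ : Set Ω))

/-- `a` is a supremum (conditional union) of the family `s` in `(P(X), ⊑)`. -/
def IsSupOf (P : @Measure Ω mΩ) (X : Set (Ω → E)) (s : Set (CondRaw Ω E))
    (a : CondRaw Ω E) : Prop :=
  IsCond P X a ∧ (∀ b ∈ s, cle P b a) ∧
    ∀ c, IsCond P X c → (∀ b ∈ s, cle P b c) → cle P a c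

/-- `a` is an infimum (conditional intersection) of the family `s` in `(P(X), ⊑)`. -/
def IsInfOf (P : @Measure Ω mΩ) (X : Set (Ω → E)) (s : Set (CondRaw Ω E))
    (a : CondRaw Ω E) : Prop :=
  IsCond P X a ∧ (∀ b ∈ s, cle P a b) ∧
    ∀ c, IsCond P X c → (∀ b ∈ s, cle P c b) → cle P c a

open Classical in
/-- The conditional union (supremum) of a family of conditional subsets. -/
def cSup (P : @Measure Ω mΩ) (X : Set (Ω → E)) (s : Set (CondRaw Ω E)) : CondRaw Ω E :=
  if h : ∃ a, IsSupOf P X s a then h.choose else ctop X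

open Classical in
/-- The conditional intersection (infimum) of a family of conditional subsets. -/
def cInf (P : @Measure Ω mΩ) (X : Set (Ω → E)) (s : Set (CondRaw Ω E)) : CondRaw Ω E :=
  if h : ∃ a, IsInfOf P X s a then h.choose else ctop X

/-- Binary conditional union. -/
def cSup₂ (P : @Measure Ω mΩ) (X : Set (Ω → E)) (a b : CondRaw Ω E) : CondRaw Ω E :=
  cSup P X {a, b}

/-- Binary conditional intersection. -/
def cInf₂ (P : @Measure Ω mΩ) (X : Set (Ω → E)) (a b : CondRaw Ω E) : CondRaw Ω E :=
  cInf P X {a, b}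

/-- Conditional union of an indexed family. -/
def cSupFam (P : @Measure Ω mΩ) (X : Set (Ω → E)) {ι : Sort*}
    (S : ι → CondRaw Ω E) : CondRaw Ω E :=
  cSup P X (range S)

/-- Conditional intersection of an indexed family. -/
def cInfFam (P : @Measure Ω mΩ) (X : Set (Ω → E)) {ι : Sort*}
    (S : ι → CondRaw Ω E) : CondRaw Ω E :=
  cInf P X (range S)

/-- Disjointness of conditional subsets: `V|A ⊓ W|B = {∗}`. -/
def cdisjoint (P : @Measure Ω mΩ) (X : Set (Ω → E)) (a b : CondRaw Ω E) : Prop :=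
  ceq P (cInf₂ P X a b) (cbot X)

/-- The conditional complement `(V|A)^⊏ := ⊔ {W|B : W|B ⊓ V|A = {∗}}`. -/
def ccompl (P : @Measure Ω mΩ) (X : Set (Ω → E)) (a : CondRaw Ω E) : CondRaw Ω E :=
  cSup P X {b | IsCond P X b ∧ cdisjoint P X b a}

open Classical in
/-- The largest measurable set (mod null sets) satisfying a property `Φ`,
obtained by an exhaustion argument; junk value `∅` if there is none. -/
def largestSet (P : @Measure Ω mΩ) (Φ : Set Ω → Prop) : Set Ω :=
  if h : ∃ C, MeasurableSet[mΩ] C ∧ Φ C ∧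
      ∀ C', MeasurableSet[mΩ] C' → Φ C' → P (C' \ C) = 0
  then h.choose else ∅

open Classical in
/-- The smallest measurable set (mod null sets) satisfying a property `Φ`. -/
def smallestSet (P : @Measure Ω mΩ) (Φ : Set Ω → Prop) : Set Ω :=
  if h : ∃ C, MeasurableSet[mΩ] C ∧ Φ C ∧
      ∀ C', MeasurableSet[mΩ] C' → Φ C' → P (C \ C') = 0
  then h.choose else univ

/-- Essential infimum `inf_i A_i` of a family of measurable sets in the measure algebra. -/
def essInfFam (P : @Measure Ω mΩ) {ι : Sort*} (A : ι → Set Ω) : Set Ω :=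
  largestSet P fun C => ∀ i, P (C \ A i) = 0

/-- Essential supremum `sup_i A_i` of a family of measurable sets in the measure algebra. -/
def essSupFam (P : @Measure Ω mΩ) {ι : Sort*} (A : ι → Set Ω) : Set Ω :=
  smallestSet P fun C => ∀ i, P (A i \ C) = 0

/-- A stable collection: a nonempty, `ceq`-saturated family of conditional subsets of `X`
closed under countable concatenations. -/
def IsStableColl (P : @Measure Ω mΩ) (X : Set (Ω → E)) (𝒞 : Set (CondRaw Ω E)) : Prop :=
  𝒞.Nonempty ∧ (∀ S ∈ 𝒞, IsCond P X S) ∧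
    (∀ S ∈ 𝒞, ∀ T, IsCond P X T → ceq P S T → T ∈ 𝒞) ∧
    ∀ (A : Partition mΩ P) (S : ℕ → CondRaw Ω E), (∀ k, S k ∈ 𝒞) → condConcat P A S ∈ 𝒞

/-- A stable σ-algebra on `X`. -/
def IsStableSigma (P : @Measure Ω mΩ) (X : Set (Ω → E)) (𝒳 : Set (CondRaw Ω E)) : Prop :=
  IsStableColl P X 𝒳 ∧ ctop X ∈ 𝒳 ∧ (∀ S ∈ 𝒳, ccompl P X S ∈ 𝒳) ∧
    ∀ S : ℕ → CondRaw Ω E, (∀ k, S k ∈ 𝒳) → cSupFam P X S ∈ 𝒳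

/-- A stable Dynkin system on `X`. -/
def IsStableDynkin (P : @Measure Ω mΩ) (X : Set (Ω → E)) (𝒟 : Set (CondRaw Ω E)) : Prop :=
  IsStableColl P X 𝒟 ∧ ctop X ∈ 𝒟 ∧ (∀ S ∈ 𝒟, ccompl P X S ∈ 𝒟) ∧
    ∀ S : ℕ → CondRaw Ω E, (∀ k, S k ∈ 𝒟) →
      (∀ i j, i ≠ j → cdisjoint P X (S i) (S j)) → cSupFam P X S ∈ 𝒟

/-- A stable ring on `X`. -/
def IsStableRing (P : @Measure Ω mΩ) (X : Set (Ω → E)) (𝒳 : Set (CondRaw Ω E)) : Prop :=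
  IsStableColl P X 𝒳 ∧
    ∀ S ∈ 𝒳, ∀ T ∈ 𝒳, cInf₂ P X S (ccompl P X T) ∈ 𝒳 ∧ cSup₂ P X S T ∈ 𝒳

/-- The stable σ-algebra generated by a collection `ℰ`. -/
def sigmaGen (P : @Measure Ω mΩ) (X : Set (Ω → E)) (ℰ : Set (CondRaw Ω E)) :
    Set (CondRaw Ω E) :=
  ⋂₀ {𝒳 | IsStableSigma P X 𝒳 ∧ ℰ ⊆ 𝒳}

/-- The stable Dynkin system generated by a collection `ℰ`. -/
def dynkinGen (P : @Measure Ω mΩ) (X : Set (Ω → E)) (ℰ : Set (CondRaw Ω E)) :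
    Set (CondRaw Ω E) :=
  ⋂₀ {𝒟 | IsStableDynkin P X 𝒟 ∧ ℰ ⊆ 𝒟}

/-! ### Stable set functions and stable measures -/

/-- A stable set function `μ : 𝒞 → L̄⁰₊` (represented by measurable representatives,
well defined modulo identification, and commuting with countable concatenations). -/
def IsStableSetFun (P : @Measure Ω mΩ) (𝒞 : Set (CondRaw Ω E))
    (μ : CondRaw Ω E → Ω → ℝ≥0∞) : Prop :=
  (∀ S ∈ 𝒞, Measurable[mΩ] (μ S)) ∧
    (∀ S ∈ 𝒞, ∀ T ∈ 𝒞, ceq P S T → μ S =ᵐ[P] μ T) ∧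
    ∀ (A : Partition mΩ P) (S : ℕ → CondRaw Ω E), (∀ k, S k ∈ 𝒞) →
      μ (condConcat P A S) =ᵐ[P] A.concat fun k => μ (S k)

/-- Property (M1): `μ(V|A) = μ(V|A)|A + 0|Aᶜ`. -/
def M1 (P : @Measure Ω mΩ) (𝒞 : Set (CondRaw Ω E)) (μ : CondRaw Ω E → Ω → ℝ≥0∞) : Prop :=
  ∀ S ∈ 𝒞, μ S =ᵐ[P] S.2.indicator (μ S)

/-- Property (M2): countable additivity on pairwise disjoint sequences whose
conditional union belongs to the domain. -/
def M2 (P : @Measure Ω mΩ) (X : Set (Ω → E)) (𝒳 : Set (CondRaw Ω E))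
    (μ : CondRaw Ω E → Ω → ℝ≥0∞) : Prop :=
  ∀ S : ℕ → CondRaw Ω E, (∀ k, S k ∈ 𝒳) →
    (∀ i j, i ≠ j → cdisjoint P X (S i) (S j)) → cSupFam P X S ∈ 𝒳 →
    μ (cSupFam P X S) =ᵐ[P] fun ω => ∑' k, μ (S k) ω

/-- Finite additivity: (M2) for finite pairwise disjoint families. -/
def FinAdd (P : @Measure Ω mΩ) (X : Set (Ω → E)) (𝒳 : Set (CondRaw Ω E))
    (μ : CondRaw Ω E → Ω → ℝ≥0∞) : Prop :=
  ∀ (n : ℕ) (S : Fin n → CondRaw Ω E), (∀ k, S k ∈ 𝒳) →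
    (∀ i j, i ≠ j → cdisjoint P X (S i) (S j)) → cSupFam P X S ∈ 𝒳 →
    μ (cSupFam P X S) =ᵐ[P] fun ω => ∑ k, μ (S k) ω

/-- A stable measure (or stable pre-measure, when the domain is merely a stable
ring): a stable set function satisfying (M1) and (M2). -/
def IsStableMeasureOn (P : @Measure Ω mΩ) (X : Set (Ω → E)) (𝒳 : Set (CondRaw Ω E))
    (μ : CondRaw Ω E → Ω → ℝ≥0∞) : Prop :=
  IsStableSetFun P 𝒳 μ ∧ M1 P 𝒳 μ ∧ M2 P X 𝒳 μ

/-- A finite stable measure. -/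
def IsFiniteStableMeasureOn (P : @Measure Ω mΩ) (X : Set (Ω → E))
    (𝒳 : Set (CondRaw Ω E)) (μ : CondRaw Ω E → Ω → ℝ≥0∞) : Prop :=
  IsStableMeasureOn P X 𝒳 μ ∧ ∀ᵐ ω ∂P, μ (ctop X) ω < ∞

/-- A stable probability measure. -/
def IsStableProbOn (P : @Measure Ω mΩ) (X : Set (Ω → E)) (𝒳 : Set (CondRaw Ω E))
    (μ : CondRaw Ω E → Ω → ℝ≥0∞) : Prop :=
  IsStableMeasureOn P X 𝒳 μ ∧ μ (ctop X) =ᵐ[P] fun _ => (1 : ℝ≥0∞)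

/-- A stable outer measure on the conditional power set of `X`. -/
def IsStableOuter (P : @Measure Ω mΩ) (X : Set (Ω → E))
    (μ : CondRaw Ω E → Ω → ℝ≥0∞) : Prop :=
  (∀ S, IsCond P X S → Measurable[mΩ] (μ S)) ∧
    (∀ S T, IsCond P X S → IsCond P X T → ceq P S T → μ S =ᵐ[P] μ T) ∧
    (∀ (A : Partition mΩ P) (S : ℕ → CondRaw Ω E), (∀ k, IsCond P X (S k)) →
      μ (condConcat P A S) =ᵐ[P] A.concat fun k => μ (S k)) ∧
    (∀ S, IsCond P X S → ∀ B, MeasurableSet[mΩ] B →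
      μ (crestrict S B) =ᵐ[P] B.indicator (μ S)) ∧
    (∀ S T, IsCond P X S → IsCond P X T → cle P S T → ∀ᵐ ω ∂P, μ S ω ≤ μ T ω) ∧
    ∀ S : ℕ → CondRaw Ω E, (∀ k, IsCond P X (S k)) →
      ∀ᵐ ω ∂P, μ (cSupFam P X S) ω ≤ ∑' k, μ (S k) ω

/-- Stable Carathéodory measurability with respect to a stable outer measure. -/
def CaraMeasurable (P : @Measure Ω mΩ) (X : Set (Ω → E))
    (μ : CondRaw Ω E → Ω → ℝ≥0∞) (S : CondRaw Ω E) : Prop :=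
  ∀ T, IsCond P X T →
    (fun ω => μ (cInf₂ P X T S) ω + μ (cInf₂ P X T (ccompl P X S)) ω) =ᵐ[P] μ T

/-! ### Stable functions, the stable Borel σ-algebra on `L⁰`, and the integral -/

/-- The stable set `L⁰_m(E)` of all (classes of) measurable functions `Ω → E`. -/
def l0m (P : @Measure Ω mΩ) (E : Type*) [MeasurableSpace E] : Set (Ω → E) :=
  {x | AEMeasurable x P}

/-- A stable function between stable sets of functions. -/
def StableFun (P : @Measure Ω mΩ) (X : Set (Ω → E)) (Y : Set (Ω → F'))
    (f : (Ω → E) → Ω → F') : Prop :=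
  (∀ x ∈ X, f x ∈ Y) ∧ (∀ x ∈ X, ∀ y ∈ X, x =ᵐ[P] y → f x =ᵐ[P] f y) ∧
    ∀ (A : Partition mΩ P) (x : ℕ → Ω → E), (∀ k, x k ∈ X) →
      f (A.concat x) =ᵐ[P] A.concat fun k => f (x k)

/-- The conditional preimage `f⁻¹(W|A)`. -/
def cPreimage (P : @Measure Ω mΩ) (X : Set (Ω → E)) (f : (Ω → E) → Ω → F')
    (W : CondRaw Ω F') : CondRaw Ω E :=
  ({x ∈ X | memOn P (largestSet P fun C => P (C \ W.2) = 0 ∧ ∃ x ∈ X, memOn P C (f x) W.1)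
      (f x) W.1},
    largestSet P fun C => P (C \ W.2) = 0 ∧ ∃ x ∈ X, memOn P C (f x) W.1)

/-- The stable Borel σ-algebra `B(L⁰)` on `L⁰`, generated by the stable open balls. -/
def borelL0 (P : @Measure Ω mΩ) : Set (CondRaw Ω ℝ) :=
  sigmaGen P (l0m P ℝ)
    {S | ∃ r ε : Ω → ℝ, AEMeasurable r P ∧ AEMeasurable ε P ∧ (∀ᵐ ω ∂P, 0 < ε ω) ∧
      ceq P S ({s | AEMeasurable s P ∧ ∀ᵐ ω ∂P, |s ω - r ω| < ε ω}, univ)}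

/-- A stably measurable function `f : X → L⁰` with respect to a stable σ-algebra `𝒳`. -/
def StablyMeasurable (P : @Measure Ω mΩ) (X : Set (Ω → E)) (𝒳 : Set (CondRaw Ω E))
    (f : (Ω → E) → Ω → ℝ) : Prop :=
  StableFun P X (l0m P ℝ) f ∧ ∀ W ∈ borelL0 P, cPreimage P X f W ∈ 𝒳

/-- The base set `A_x` of the stable indicator function of `S = V|A` at `x`. -/
def indBase (P : @Measure Ω mΩ) (S : CondRaw Ω E) (x : Ω → E) : Set Ω :=
  largestSet P fun C => P (C \ S.2) = 0 ∧ memOn P C x S.1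

/-- The stable indicator function `1_{V|A} : X → L⁰`. -/
def cIndicator (P : @Measure Ω mΩ) (S : CondRaw Ω E) (x : Ω → E) : Ω → ℝ :=
  (indBase P S x).indicator fun _ => (1 : ℝ)

/-- Data of a stable elementary function: coefficients and conditional sets. -/
def ElemRep (Ω E : Type*) := Σ n : ℕ, (Fin n → Ω → ℝ) × (Fin n → CondRaw Ω E)

/-- The function `∑_{k ≤ n} r_k 1_{V_k|A_k}` represented by `ρ`. -/
def repFun (P : @Measure Ω mΩ) (ρ : ElemRep Ω E) : (Ω → E) → Ω → ℝ :=
  fun x ω => ∑ k, ρ.2.1 k ω * cIndicator P (ρ.2.2 k) x ω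

/-- The representation `ρ` is admissible: nonnegative `L⁰`-coefficients and a finite
pairwise disjoint family in `𝒳` whose conditional union is `X`. -/
def GoodRep (P : @Measure Ω mΩ) (X : Set (Ω → E)) (𝒳 : Set (CondRaw Ω E))
    (ρ : ElemRep Ω E) : Prop :=
  (∀ k, AEMeasurable (ρ.2.1 k) P) ∧ (∀ k, ∀ᵐ ω ∂P, 0 ≤ ρ.2.1 k ω) ∧
    (∀ k, ρ.2.2 k ∈ 𝒳) ∧ (∀ i j, i ≠ j → cdisjoint P X (ρ.2.2 i) (ρ.2.2 j)) ∧
    ceq P (cSupFam P X ρ.2.2) (ctop X)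

/-- A stable elementary function. -/
def IsElementary (P : @Measure Ω mΩ) (X : Set (Ω → E)) (𝒳 : Set (CondRaw Ω E))
    (f : (Ω → E) → Ω → ℝ) : Prop :=
  ∃ ρ : ElemRep Ω E, GoodRep P X 𝒳 ρ ∧ ∀ x ∈ X, f x =ᵐ[P] repFun P ρ x

/-- The stable Lebesgue integral `∑_k r_k μ(V_k|A_k)` of the elementary representation. -/
def repInt (μ : CondRaw Ω E → Ω → ℝ≥0∞) (ρ : ElemRep Ω E) : Ω → ℝ≥0∞ :=
  fun ω => ∑ k, ENNReal.ofReal (ρ.2.1 k ω) * μ (ρ.2.2 k) ω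

/-- The stable Lebesgue integral of a nonnegative function, as the supremum of the
integrals of the dominated stable elementary functions. -/
def cIntNN (P : @Measure Ω mΩ) (X : Set (Ω → E)) (𝒳 : Set (CondRaw Ω E))
    (μ : CondRaw Ω E → Ω → ℝ≥0∞) (f : (Ω → E) → Ω → ℝ) : Ω → ℝ≥0∞ :=
  fun ω =>
    ⨆ ρ : {ρ : ElemRep Ω E // GoodRep P X 𝒳 ρ ∧
        ∀ x ∈ X, ∀ᵐ ω' ∂P, repFun P ρ x ω' ≤ f x ω'},
      repInt μ ρ.1 ω

/-- The positive part `f⁺` of an `L⁰`-valued function. -/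
def fplus (f : (Ω → E) → Ω → ℝ) : (Ω → E) → Ω → ℝ := fun x ω => max (f x ω) 0

/-- The negative part `f⁻` of an `L⁰`-valued function. -/
def fminus (f : (Ω → E) → Ω → ℝ) : (Ω → E) → Ω → ℝ := fun x ω => max (-(f x ω)) 0

/-- Stable integrability of `f : X → L⁰`. -/
def CIntegrable (P : @Measure Ω mΩ) (X : Set (Ω → E)) (𝒳 : Set (CondRaw Ω E))
    (μ : CondRaw Ω E → Ω → ℝ≥0∞) (f : (Ω → E) → Ω → ℝ) : Prop :=
  StablyMeasurable P X 𝒳 f ∧ (∀ᵐ ω ∂P, cIntNN P X 𝒳 μ (fplus f) ω < ∞) ∧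
    ∀ᵐ ω ∂P, cIntNN P X 𝒳 μ (fminus f) ω < ∞

/-- The stable Lebesgue integral `∫_X f dμ := ∫ f⁺ dμ − ∫ f⁻ dμ`. -/
def cInt (P : @Measure Ω mΩ) (X : Set (Ω → E)) (𝒳 : Set (CondRaw Ω E))
    (μ : CondRaw Ω E → Ω → ℝ≥0∞) (f : (Ω → E) → Ω → ℝ) : Ω → ℝ :=
  fun ω => (cIntNN P X 𝒳 μ (fplus f) ω).toReal - (cIntNN P X 𝒳 μ (fminus f) ω).toReal

/-! ### Products and sections -/

/-- The pairing `ω ↦ (x ω, y ω)`. -/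
def pairFn (x : Ω → E) (y : Ω → F') : Ω → E × F' := fun ω => (x ω, y ω)

/-- The Cartesian product `X × Y` of two stable sets, as a stable set of functions
`Ω → E × F'`. -/
def prodSet (P : @Measure Ω mΩ) (X : Set (Ω → E)) (Y : Set (Ω → F')) :
    Set (Ω → E × F') :=
  {z | ∃ x ∈ X, ∃ y ∈ Y, z =ᵐ[P] pairFn x y}

/-- The conditional rectangle `V|A × W|B := (V × W)|A ∩ B`. -/
def crect (P : @Measure Ω mΩ) (S : CondRaw Ω E) (T : CondRaw Ω F') :
    CondRaw Ω (E × F') :=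
  (prodSet P S.1 T.1, S.2 ∩ T.2)

/-- The stable product σ-algebra `𝒳 ⊗ 𝒴`, generated by the conditional rectangles. -/
def prodSigma (P : @Measure Ω mΩ) (X : Set (Ω → E)) (Y : Set (Ω → F'))
    (𝒳 : Set (CondRaw Ω E)) (𝒴 : Set (CondRaw Ω F')) : Set (CondRaw Ω (E × F')) :=
  sigmaGen P (prodSet P X Y) {R | ∃ S ∈ 𝒳, ∃ T ∈ 𝒴, ceq P R (crect P S T)}

/-- The conditional `x`-section `(Z|C)_x` of a conditional subset of `X × Y`. -/
def xsection (P : @Measure Ω mΩ) (Y : Set (Ω → F')) (Z : CondRaw Ω (E × F'))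
    (x : Ω → E) : CondRaw Ω F' :=
  ({y ∈ Y | memOn P (largestSet P fun D => P (D \ Z.2) = 0 ∧ ∃ y ∈ Y, memOn P D (pairFn x y) Z.1)
      (pairFn x y) Z.1},
    largestSet P fun D => P (D \ Z.2) = 0 ∧ ∃ y ∈ Y, memOn P D (pairFn x y) Z.1)

/-- The conditional `y`-section `(Z|C)_y` of a conditional subset of `X × Y`. -/
def ysection (P : @Measure Ω mΩ) (X : Set (Ω → E)) (Z : CondRaw Ω (E × F'))
    (y : Ω → F') : CondRaw Ω E :=
  ({x ∈ X | memOn P (largestSet P fun D => P (D \ Z.2) = 0 ∧ ∃ x ∈ X, memOn P D (pairFn x y) Z.1)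
      (pairFn x y) Z.1},
    largestSet P fun D => P (D \ Z.2) = 0 ∧ ∃ x ∈ X, memOn P D (pairFn x y) Z.1)

/-! ### Conditional subsets of `L⁰_m(E)` associated to measurable sets -/

/-- `L⁰_m(F) = {x ∈ L⁰_m(E) : x ∈ F a.s.}` for a measurable `F ⊆ E`. -/
def l0mF (P : @Measure Ω mΩ) {E : Type*} [MeasurableSpace E] (F : Set E) : Set (Ω → E) :=
  {x | AEMeasurable x P ∧ ∀ᵐ ω ∂P, x ω ∈ F}

/-- `∑ L⁰_m(F_k)|A_k = {x ∈ L⁰_m(E) : x ∈ F_k a.s. on A_k for all k}`. -/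
def l0mConcat (P : @Measure Ω mΩ) {E : Type*} [MeasurableSpace E]
    (A : Partition mΩ P) (F : ℕ → Set E) : Set (Ω → E) :=
  {x | AEMeasurable x P ∧ ∀ k, ∀ᵐ ω ∂P, ω ∈ A.part k → x ω ∈ F k}

/-- The stable ring `ℛ` on `L⁰_m(E)` generated by a measurable structure on `E`:
all conditional subsets of the form `(∑ L⁰_m(F_k)|A_k)|B`. -/
def ringR (P : @Measure Ω mΩ) (E : Type*) [MeasurableSpace E] : Set (CondRaw Ω E) :=
  {S | ∃ (F : ℕ → Set E) (A : Partition mΩ P) (B : Set Ω),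
    (∀ k, MeasurableSet (F k)) ∧ MeasurableSet[mΩ] B ∧
      ceq P S (l0mConcat P A F, B)}

end CondMT

namespace CondMT

/-!
A conditional subset `S` of `X` is determined by its trace, which assigns to every `x ∈ X` the class
of the largest event on which `x` belongs to `S`. Because stable sets admit gluing along countable
partitions, the traces are exactly the families of events that are local in `x`, and these form a
Boolean subalgebra, closed under countable suprema, of the algebra of all families of events modulo
null sets. Conditional unions, intersections and complements thus become pointwise operations, and
`μ` becomes an a.s. additive set function on a ring of elements of a Boolean algebra. There the
classical proofs apply: `b = a ⊔ (b \ a)` gives (M3)–(M5), replacing a sequence by the disjoint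
sequence of its successive differences gives (M6) and (M7), and taking differences from a fixed
element exchanges continuity from below with continuity from above.
-/

section BooleanRing

variable {α : Type*} [GeneralizedBooleanAlgebra α] {R : Set α} {a b : α} {s : ℕ → α}

/-- A ring of elements of a generalized Boolean algebra, in the sense of rings of sets: a collection
closed under binary suprema and differences. -/
structure IsBoolRing (R : Set α) : Prop where
  sup_mem : ∀ {a b}, a ∈ R → b ∈ R → a ⊔ b ∈ R
  sdiff_mem : ∀ {a b}, a ∈ R → b ∈ R → a \ b ∈ R

lemma IsBoolRing.inf_mem (hR : IsBoolRing R) (ha : a ∈ R) (hb : b ∈ R) : a ⊓ b ∈ R :=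
  sdiff_sdiff_right_self (x := a) (y := b) ▸ hR.sdiff_mem ha (hR.sdiff_mem ha hb)

lemma IsBoolRing.partialSups_mem (hR : IsBoolRing R) (hs : ∀ k, s k ∈ R) (n : ℕ) :
    partialSups s n ∈ R := by
  induction n with
  | zero => simpa using hs 0
  | succ n ih => simpa using hR.sup_mem ih (hs (n + 1))

lemma IsBoolRing.disjointed_mem (hR : IsBoolRing R) (hs : ∀ k, s k ∈ R) (n : ℕ) :
    disjointed s n ∈ R :=
  disjointedRec (fun _ i ht => hR.sdiff_mem ht (hs i)) (hs n)

lemma isLUB_range_partialSups_iff :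
    IsLUB (range fun n => partialSups s n) a ↔ IsLUB (range s) a := by
  rw [IsLUB, IsLUB, upperBounds_range_partialSups]

lemma isLUB_range_disjointed_iff : IsLUB (range (disjointed s)) a ↔ IsLUB (range s) a := by
  rw [← isLUB_range_partialSups_iff, partialSups_disjointed, isLUB_range_partialSups_iff]

lemma isLUB_range_sdiff_of_isGLB {ι : Type*} {s : ι → α} (h : IsGLB (range s) a) (b : α) :
    IsLUB (range fun k => b \ s k) (b \ a) := by
  refine ⟨forall_mem_range.2 fun k => sdiff_le_sdiff_left (h.1 ⟨k, rfl⟩), fun c hc => ?_⟩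
  rw [sdiff_le_comm]
  exact h.2 (forall_mem_range.2 fun k => sdiff_le_comm.1 (hc ⟨k, rfl⟩))

lemma isGLB_range_sdiff_of_isLUB {ι : Type*} [Nonempty ι] {s : ι → α} (h : IsLUB (range s) a) :
    IsGLB (range fun k => a \ s k) ⊥ := by
  refine ⟨fun _ _ => bot_le, fun c hc => ?_⟩
  have hsc : a ≤ a \ c := h.2 <| forall_mem_range.2 fun k =>
    le_sdiff.2 ⟨h.1 ⟨k, rfl⟩, (le_sdiff.1 (hc ⟨k, rfl⟩)).2.symm⟩
  have hca : c ≤ a := (hc ⟨Classical.arbitrary ι, rfl⟩).trans sdiff_le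
  exact (le_sdiff.1 hsc).2.symm le_rfl hca

end BooleanRing

lemma eq_iInf_of_sub_eq_iSup_sub {ι : Type*} [Nonempty ι] {c x : ℝ≥0∞} {f : ι → ℝ≥0∞}
    (hc : c ≠ ∞) (hx : x ≤ c) (hf : ∀ k, f k ≤ c) (h : c - x = ⨆ k, (c - f k)) :
    x = ⨅ k, f k := by
  rw [← ENNReal.sub_iInf] at h
  rw [← ENNReal.sub_sub_cancel hc hx, h, ENNReal.sub_sub_cancel hc]
  exact (iInf_le f (Classical.arbitrary ι)).trans (hf _)

section SetFunction

open scoped Function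

variable {Ω α : Type*} [GeneralizedBooleanAlgebra α] {l : Filter Ω} {R : Set α}
  {m : α → Ω → ℝ≥0∞} {a b : α} {s : ℕ → α}

/-- `m` is a finitely additive `ℝ≥0∞`-valued function on `R`, its values being random variables
identified along the filter `l`. -/
def IsContentOn (l : Filter Ω) (R : Set α) (m : α → Ω → ℝ≥0∞) : Prop :=
  ∀ a ∈ R, ∀ b ∈ R, Disjoint a b → m (a ⊔ b) =ᶠ[l] m a + m b

/-- Countable additivity of `m` along the disjoint sequences in `R` having a supremum in `R`. -/
def CountablyAdditiveOn (l : Filter Ω) (R : Set α) (m : α → Ω → ℝ≥0∞) : Prop :=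
  ∀ s : ℕ → α, (∀ k, s k ∈ R) → Pairwise (Disjoint on s) → ∀ a ∈ R, IsLUB (range s) a →
    m a =ᶠ[l] fun ω => ∑' k, m (s k) ω

/-- Continuity of `m` along the increasing sequences in `R` having a supremum in `R`. -/
def ContinuousFromBelowOn (l : Filter Ω) (R : Set α) (m : α → Ω → ℝ≥0∞) : Prop :=
  ∀ s : ℕ → α, (∀ k, s k ∈ R) → Monotone s → ∀ a ∈ R, IsLUB (range s) a →
    m a =ᶠ[l] fun ω => ⨆ k, m (s k) ω

/-- Continuity of `m` along the decreasing sequences in `R` having an infimum in `R`. -/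
def ContinuousFromAboveOn (l : Filter Ω) (R : Set α) (m : α → Ω → ℝ≥0∞) : Prop :=
  ∀ s : ℕ → α, (∀ k, s k ∈ R) → Antitone s → ∀ a ∈ R, IsGLB (range s) a →
    m a =ᶠ[l] fun ω => ⨅ k, m (s k) ω

namespace IsContentOn

lemma add_sdiff (hm : IsContentOn l R m) (hR : IsBoolRing R) (ha : a ∈ R) (hb : b ∈ R)
    (hab : a ≤ b) : m a + m (b \ a) =ᶠ[l] m b := by
  simpa only [sup_sdiff_cancel_right hab] using
    (hm a ha _ (hR.sdiff_mem hb ha) disjoint_sdiff_self_right).symm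

lemma sup_add_inf (hm : IsContentOn l R m) (hR : IsBoolRing R) (ha : a ∈ R) (hb : b ∈ R) :
    m (a ⊔ b) + m (a ⊓ b) =ᶠ[l] m a + m b := by
  have hsup : m a + m (b \ a) =ᶠ[l] m (a ⊔ b) := by
    simpa only [sup_sdiff_left_self, sup_sdiff_self_right] using
      (hm a ha _ (hR.sdiff_mem hb ha) disjoint_sdiff_self_right).symm
  have hinf : m (a ⊓ b) + m (b \ a) =ᶠ[l] m b := by
    simpa only [sdiff_inf_self_right] using
      hm.add_sdiff hR (hR.inf_mem ha hb) hb inf_le_right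
  calc m (a ⊔ b) + m (a ⊓ b)
      =ᶠ[l] m a + m (b \ a) + m (a ⊓ b) := hsup.symm.add .rfl
    _ = m a + (m (a ⊓ b) + m (b \ a)) := by ring
    _ =ᶠ[l] m a + m b := .add .rfl hinf

lemma mono (hm : IsContentOn l R m) (hR : IsBoolRing R) (ha : a ∈ R) (hb : b ∈ R) (hab : a ≤ b) :
    m a ≤ᶠ[l] m b := by
  filter_upwards [hm.add_sdiff hR ha hb hab] with ω h
  exact h ▸ le_self_add

lemma sdiff (hm : IsContentOn l R m) (hR : IsBoolRing R) (ha : a ∈ R) (hb : b ∈ R) (hab : a ≤ b)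
    (hfin : ∀ᶠ ω in l, m a ω < ∞) : m (b \ a) =ᶠ[l] m b - m a := by
  filter_upwards [hm.add_sdiff hR ha hb hab, hfin] with ω h hω
  exact ENNReal.eq_sub_of_add_eq hω.ne (by rw [add_comm]; exact h)

lemma bot (hm : IsContentOn l R m) (hR : IsBoolRing R) (ha : a ∈ R)
    (hfin : ∀ᶠ ω in l, m a ω < ∞) : m ⊥ =ᶠ[l] 0 := by
  simpa using hm.sdiff hR ha ha le_rfl hfin

lemma partialSups_eq_sum (hm : IsContentOn l R m) (hR : IsBoolRing R) (hs : ∀ k, s k ∈ R)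
    (hdisj : Pairwise (Disjoint on s)) (n : ℕ) :
    m (partialSups s n) =ᶠ[l] fun ω => ∑ k ∈ Finset.range (n + 1), m (s k) ω := by
  induction n with
  | zero => simp
  | succ n ih =>
    have hn := hm _ (hR.partialSups_mem hs n) _ (hs (n + 1))
      (partialSups_disjoint_of_disjoint s hdisj n.lt_succ_self)
    filter_upwards [ih, hn] with ω hω hnω
    rw [partialSups_add_one, hnω, Pi.add_apply, hω, Finset.sum_range_succ _ (n + 1)]

variable [CountableInterFilter l]

lemma iSup_partialSups_eq_tsum (hm : IsContentOn l R m) (hR : IsBoolRing R) (hs : ∀ k, s k ∈ R)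
    (hdisj : Pairwise (Disjoint on s)) :
    (fun ω => ⨆ n, m (partialSups s n) ω) =ᶠ[l] fun ω => ∑' k, m (s k) ω := by
  filter_upwards [eventually_countable_forall.2 (hm.partialSups_eq_sum hR hs hdisj)] with ω hω
  rw [ENNReal.tsum_eq_iSup_nat' (tendsto_add_atTop_nat 1)]
  exact iSup_congr hω

lemma le_tsum_of_isLUB (hm : IsContentOn l R m) (hR : IsBoolRing R)
    (hσ : CountablyAdditiveOn l R m) (hs : ∀ k, s k ∈ R) (ha : a ∈ R) (h : IsLUB (range s) a) :
    m a ≤ᶠ[l] fun ω => ∑' k, m (s k) ω := by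
  have hsum := hσ _ (hR.disjointed_mem hs) (disjoint_disjointed s) a ha
    (isLUB_range_disjointed_iff.2 h)
  have hle : ∀ᶠ ω in l, ∀ k, m (disjointed s k) ω ≤ m (s k) ω :=
    eventually_countable_forall.2 fun k =>
      hm.mono hR (hR.disjointed_mem hs k) (hs k) (disjointed_le s k)
  filter_upwards [hsum, hle] with ω hω hleω
  exact hω.trans_le (ENNReal.tsum_le_tsum hleω)

theorem countablyAdditiveOn_iff_continuousFromBelowOn (hm : IsContentOn l R m)
    (hR : IsBoolRing R) : CountablyAdditiveOn l R m ↔ ContinuousFromBelowOn l R m := by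
  constructor
  · intro hσ s hs hmono a ha h
    have hdisj := disjoint_disjointed s
    have hsum := hσ _ (hR.disjointed_mem hs) hdisj a ha (isLUB_range_disjointed_iff.2 h)
    have hsup := hm.iSup_partialSups_eq_tsum hR (hR.disjointed_mem hs) hdisj
    rw [partialSups_disjointed, hmono.partialSups_eq] at hsup
    exact hsum.trans hsup.symm
  · intro hcont s hs hdisj a ha h
    have hsup := hcont _ (hR.partialSups_mem hs) (partialSups_monotone s) a ha
      (isLUB_range_partialSups_iff.2 h)
    exact hsup.trans (hm.iSup_partialSups_eq_tsum hR hs hdisj)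

lemma continuousFromAboveOn (hm : IsContentOn l R m) (hR : IsBoolRing R)
    (hfin : ∀ a ∈ R, ∀ᶠ ω in l, m a ω < ∞) (hcont : ContinuousFromBelowOn l R m) :
    ContinuousFromAboveOn l R m := by
  intro s hs hanti a ha h
  have has : a ≤ s 0 := h.1 ⟨0, rfl⟩
  have hs0 : ∀ k, s k ≤ s 0 := fun k => hanti k.zero_le
  have hsup := hcont (fun k => s 0 \ s k) (fun k => hR.sdiff_mem (hs 0) (hs k))
    (fun i j hij => sdiff_le_sdiff_left (hanti hij)) _ (hR.sdiff_mem (hs 0) ha)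
    (isLUB_range_sdiff_of_isGLB h (s 0))
  filter_upwards [hsup, hfin _ (hs 0), hm.mono hR ha (hs 0) has,
    hm.sdiff hR ha (hs 0) has (hfin a ha),
    eventually_countable_forall.2 fun k => hm.mono hR (hs k) (hs 0) (hs0 k),
    eventually_countable_forall.2 fun k => hm.sdiff hR (hs k) (hs 0) (hs0 k) (hfin _ (hs k))]
    with ω hsupω hfinω haω hdiffω hsω hsdiffω
  refine eq_iInf_of_sub_eq_iSup_sub hfinω.ne haω hsω ?_
  simpa only [hdiffω, hsdiffω, Pi.sub_apply] using hsupω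

lemma continuousFromBelowOn (hm : IsContentOn l R m) (hR : IsBoolRing R)
    (hfin : ∀ a ∈ R, ∀ᶠ ω in l, m a ω < ∞) (hcont : ContinuousFromAboveOn l R m) :
    ContinuousFromBelowOn l R m := by
  intro s hs hmono a ha h
  have hsa : ∀ k, s k ≤ a := fun k => h.1 ⟨k, rfl⟩
  have hinf := hcont (fun k => a \ s k) (fun k => hR.sdiff_mem ha (hs k))
    (fun i j hij => sdiff_le_sdiff_left (hmono hij)) ⊥
    (_root_.sdiff_self (a := a) ▸ hR.sdiff_mem ha ha)
    (isGLB_range_sdiff_of_isLUB h)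
  filter_upwards [hinf, hm.bot hR ha (hfin a ha), hfin a ha,
    eventually_countable_forall.2 fun k => hm.mono hR (hs k) ha (hsa k),
    eventually_countable_forall.2 fun k => hm.sdiff hR (hs k) ha (hsa k) (hfin _ (hs k))]
    with ω hinfω hbotω hfinω hsω hsdiffω
  refine le_antisymm (tsub_eq_zero_iff_le.1 ?_) (iSup_le hsω)
  calc m a ω - ⨆ k, m (s k) ω = ⨅ k, m (a \ s k) ω := by
        simp only [ENNReal.sub_iSup hfinω.ne, hsdiffω, Pi.sub_apply]
    _ = 0 := hinfω.symm.trans hbotω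

theorem countablyAdditiveOn_iff_continuousFromAboveOn (hm : IsContentOn l R m)
    (hR : IsBoolRing R) (hfin : ∀ a ∈ R, ∀ᶠ ω in l, m a ω < ∞) :
    CountablyAdditiveOn l R m ↔ ContinuousFromAboveOn l R m :=
  (hm.countablyAdditiveOn_iff_continuousFromBelowOn hR).trans
    ⟨hm.continuousFromAboveOn hR hfin, hm.continuousFromBelowOn hR hfin⟩

end IsContentOn

end SetFunction

section MeasureAlgebra

instance {Ω β : Type*} {l : Filter Ω} [BooleanAlgebra β] : BooleanAlgebra (Germ l β) where
  __ := (inferInstance : DistribLattice (Germ l β))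
  __ := (inferInstance : BoundedOrder (Germ l β))
  compl := Germ.map compl
  inf_compl_le_bot f :=
    Germ.inductionOn f fun _ => Eventually.of_forall fun _ => inf_compl_eq_bot.le
  top_le_sup_compl f :=
    Germ.inductionOn f fun _ => Eventually.of_forall fun _ => sup_compl_eq_top.ge

variable {Ω ι : Type*} {mΩ : MeasurableSpace Ω} {P : @Measure Ω mΩ} {C D : Set Ω}

/-- The class of the set `C` modulo `P`-null sets, as a germ of predicates on `Ω`. -/
def aeClass (P : @Measure Ω mΩ) (C : Set Ω) : Germ (ae P) Prop := ((· ∈ C : Ω → Prop) : Germ _ _)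

lemma aeClass_le_aeClass : aeClass P C ≤ aeClass P D ↔ C ≤ᵐ[P] D := Iff.rfl

lemma aeClass_inter : aeClass P (C ∩ D) = aeClass P C ⊓ aeClass P D := rfl

lemma aeClass_union : aeClass P (C ∪ D) = aeClass P C ⊔ aeClass P D := rfl

lemma aeClass_compl : aeClass P Cᶜ = (aeClass P C)ᶜ := rfl

lemma aeClass_empty : aeClass P ∅ = ⊥ := rfl

lemma aeClass_univ : aeClass P univ = ⊤ := rfl

lemma aeClass_mono (h : C ⊆ D) : aeClass P C ≤ aeClass P D :=
  aeClass_le_aeClass.2 (LE.le.eventuallyLE h)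

lemma isLUB_aeClass_iUnion [Countable ι] (C : ι → Set Ω) :
    IsLUB (range fun i => aeClass P (C i)) (aeClass P (⋃ i, C i)) := by
  refine ⟨forall_mem_range.2 fun i => aeClass_mono (subset_iUnion C i), fun g => ?_⟩
  refine Germ.inductionOn g fun p hp => ?_
  filter_upwards [ae_all_iff.2 fun i => hp ⟨i, rfl⟩] with ω hω hmem
  exact (mem_iUnion.1 hmem).elim hω

/-- The measurable sets satisfying `Φ` are closed under countable unions. Under this condition
`largestSet P Φ` is an essentially largest such set rather than the junk value `∅`. -/
structure IsSigmaUnionClosed [MeasurableSpace Ω] (Φ : Set Ω → Prop) : Prop where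
  empty : Φ ∅
  iUnion : ∀ C : ℕ → Set Ω, (∀ k, MeasurableSet (C k)) → (∀ k, Φ (C k)) → Φ (⋃ k, C k)

variable {Φ : Set Ω → Prop}

lemma IsSigmaUnionClosed.union (hΦ : IsSigmaUnionClosed Φ) (hC : MeasurableSet C)
    (hD : MeasurableSet D) (hΦC : Φ C) (hΦD : Φ D) : Φ (C ∪ D) := by
  have h := hΦ.iUnion (fun | 0 => C | _ + 1 => D) (by rintro (_ | _); exacts [hC, hD])
    (by rintro (_ | _); exacts [hΦC, hΦD])
  rwa [← Set.union_iUnion_nat_succ, iUnion_const] at h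

lemma IsSigmaUnionClosed.exists_largest [SFinite P] (hΦ : IsSigmaUnionClosed Φ) :
    ∃ C, MeasurableSet C ∧ Φ C ∧ ∀ C', MeasurableSet C' → Φ C' → P (C' \ C) = 0 := by
  obtain ⟨u, -, hu, hus⟩ := exists_seq_tendsto_sSup
    (S := P.toFinite '' {C | MeasurableSet C ∧ Φ C}) ⟨_, ∅, ⟨.empty, hΦ.empty⟩, rfl⟩
    (OrderTop.bddAbove _)
  choose C hC hCu using hus
  have hmeas : MeasurableSet (⋃ k, C k) := .iUnion fun k => (hC k).1
  have hΦC : Φ (⋃ k, C k) := hΦ.iUnion C (fun k => (hC k).1) fun k => (hC k).2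
  refine ⟨⋃ k, C k, hmeas, hΦC, fun C' hC' hΦC' => ?_⟩
  have hmax : P.toFinite ((⋃ k, C k) ∪ C') ≤ P.toFinite (⋃ k, C k) :=
    calc P.toFinite ((⋃ k, C k) ∪ C')
        ≤ sSup (P.toFinite '' {C | MeasurableSet C ∧ Φ C}) :=
          le_sSup ⟨_, ⟨hmeas.union hC', hΦ.union hmeas hC' hΦC hΦC'⟩, rfl⟩
      _ ≤ P.toFinite (⋃ k, C k) :=
          le_of_tendsto' hu fun k => hCu k ▸ measure_mono (subset_iUnion C k)
  have hae : (⋃ k, C k) =ᵐ[P.toFinite] ((⋃ k, C k) ∪ C' : Set Ω) :=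
    ae_eq_of_subset_of_measure_ge subset_union_left hmax hmeas.nullMeasurableSet
      (measure_ne_top _ _)
  rw [← ae_le_set, ← ae_toFinite (μ := P)]
  exact (LE.le.eventuallyLE subset_union_right).trans hae.symm.le

lemma IsSigmaUnionClosed.largestSet_spec [SFinite P] (hΦ : IsSigmaUnionClosed Φ) :
    MeasurableSet (largestSet P Φ) ∧ Φ (largestSet P Φ) ∧
      ∀ C, MeasurableSet C → Φ C → C ≤ᵐ[P] largestSet P Φ := by
  have h := hΦ.exists_largest (P := P)
  simp only [ae_le_set, largestSet, dif_pos h]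
  exact h.choose_spec

end MeasureAlgebra

section Gluing

variable {Ω E : Type*} {mΩ : MeasurableSpace Ω} {P : @Measure Ω mΩ} {V : Set (Ω → E)}
  {D : ℕ → Set Ω}

lemma mem_disjointed_iff {k : ℕ} {ω : Ω} :
    ω ∈ disjointed D k ↔ ω ∈ D k ∧ ∀ j < k, ω ∉ D j := by
  simp [disjointed_eq_inter_compl]

lemma Partition.concat_apply_of_mem_disjointed (A : Partition mΩ P) (x : ℕ → Ω → E) {k : ℕ}
    {ω : Ω} (hω : ω ∈ disjointed A.part k) : A.concat x ω = x k ω := by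
  classical
  have hk : ∃ k, ω ∈ A.part k := ⟨k, disjointed_subset _ _ hω⟩
  rw [Partition.concat, dif_pos hk, (Nat.find_eq_iff hk).2 (mem_disjointed_iff.1 hω)]

lemma Stable.exists_eq_on_disjointed (hV : Stable P V) (hD : ∀ k, MeasurableSet (D k))
    {x : ℕ → Ω → E} (hx : ∀ k, x k ∈ V) : ∃ z ∈ V, ∀ k, ∀ ω ∈ disjointed D k, z ω = x k ω := by
  let D' : ℕ → Set Ω := fun k => D k ∪ (⋃ j, D j)ᶜ
  have hD' : ∀ k, MeasurableSet (D' k) := fun k => (hD k).union (MeasurableSet.iUnion hD).compl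
  have hcover : ⋃ k, D' k = univ := by rw [← iUnion_union, union_compl_self]
  have hdisj : Pairwise (Function.onFun Disjoint (disjointed D')) := disjoint_disjointed D'
  let A : Partition mΩ P :=
    { part := disjointed D'
      meas := .disjointed hD'
      disj i j hij := by rw [(hdisj hij).inter_eq, measure_empty]
      cover := by rw [iUnion_disjointed, hcover, compl_univ, measure_empty] }
  refine ⟨A.concat x, hV.2.2 A x hx, fun k ω hω => A.concat_apply_of_mem_disjointed x ?_⟩
  rw [disjointed_eq_self fun j hj => hdisj hj.ne, mem_disjointed_iff]
  obtain ⟨hk, hlt⟩ := mem_disjointed_iff.1 hω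
  exact ⟨.inl hk, fun j hj => not_or.2 ⟨hlt j hj, not_not.2 (mem_iUnion_of_mem k hk)⟩⟩

lemma Stable.memOn_iUnion (hV : Stable P V) (hD : ∀ k, MeasurableSet (D k)) {x : Ω → E}
    (h : ∀ k, memOn P (D k) x V) : memOn P (⋃ k, D k) x V := by
  choose y hy hxy using h
  obtain ⟨z, hz, hzy⟩ := hV.exists_eq_on_disjointed hD hy
  refine ⟨z, hz, ?_⟩
  filter_upwards [ae_all_iff.2 hxy] with ω hω hmem
  rw [← iUnion_disjointed] at hmem
  obtain ⟨k, hk⟩ := mem_iUnion.1 hmem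
  rw [hzy k ω hk, hω k (disjointed_subset D k hk)]

end Gluing

section LocalFamily

variable {Ω E : Type*} {mΩ : MeasurableSpace Ω} {P : @Measure Ω mΩ} {X : Set (Ω → E)}

/-- The Boolean algebra of local families of measurable sets modulo null sets indexed by `X`: on a
measurable set where `x = y`, the members at `x` and at `y` agree. Conditional subsets of `X`
correspond to local families through `trace`. -/
def localFamilies (P : @Measure Ω mΩ) (X : Set (Ω → E)) :
    BooleanSubalgebra (X → Germ (ae P) Prop) where
  carrier := {f | (∀ x, ∃ C, MeasurableSet C ∧ aeClass P C = f x) ∧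
    ∀ x y : X, ∀ C, MeasurableSet C → (∀ᵐ ω ∂P, ω ∈ C → x.1 ω = y.1 ω) →
      aeClass P C ⊓ f x ≤ f y}
  supClosed' := by
    rintro f ⟨hfm, hfl⟩ g ⟨hgm, hgl⟩
    refine ⟨fun x => ?_, fun x y C hC hxy => ?_⟩
    · obtain ⟨⟨C, hC, hCf⟩, D, hD, hDg⟩ := hfm x, hgm x
      exact ⟨C ∪ D, hC.union hD, by rw [aeClass_union, hCf, hDg, Pi.sup_apply]⟩
    · rw [Pi.sup_apply, inf_sup_left]
      exact sup_le_sup (hfl x y C hC hxy) (hgl x y C hC hxy)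
  infClosed' := by
    rintro f ⟨hfm, hfl⟩ g ⟨hgm, hgl⟩
    refine ⟨fun x => ?_, fun x y C hC hxy => ?_⟩
    · obtain ⟨⟨C, hC, hCf⟩, D, hD, hDg⟩ := hfm x, hgm x
      exact ⟨C ∩ D, hC.inter hD, by rw [aeClass_inter, hCf, hDg, Pi.inf_apply]⟩
    · rw [Pi.inf_apply, inf_inf_distrib_left]
      exact inf_le_inf (hfl x y C hC hxy) (hgl x y C hC hxy)
  compl_mem' := by
    rintro f ⟨hfm, hfl⟩
    refine ⟨fun x => ?_, fun x y C hC hxy => ?_⟩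
    · obtain ⟨C, hC, hCf⟩ := hfm x
      exact ⟨Cᶜ, hC.compl, by rw [aeClass_compl, hCf, Pi.compl_apply]⟩
    · have hyx := hfl y x C hC (hxy.mono fun ω h hω => (h hω).symm)
      rw [Pi.compl_apply, Pi.compl_apply, le_compl_iff_disjoint_right, disjoint_iff_inf_le,
        inf_right_comm]
      exact (inf_le_inf_right _ hyx).trans inf_compl_eq_bot.le
  bot_mem' := ⟨fun _ => ⟨∅, .empty, aeClass_empty⟩, fun _ _ _ _ _ => inf_le_right⟩

namespace localFamilies

variable {f : X → Germ (ae P) Prop}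

lemma exists_aeClass_eq (hf : f ∈ localFamilies P X) (x : X) :
    ∃ C, MeasurableSet C ∧ aeClass P C = f x := hf.1 x

lemma inf_le_of_eqOn (hf : f ∈ localFamilies P X) {x y : X} {C : Set Ω} (hC : MeasurableSet C)
    (hxy : ∀ᵐ ω ∂P, ω ∈ C → x.1 ω = y.1 ω) : aeClass P C ⊓ f x ≤ f y := hf.2 x y C hC hxy

lemma exists_isLUB {ι : Type*} [Countable ι] {f : ι → X → Germ (ae P) Prop}
    (hf : ∀ i, f i ∈ localFamilies P X) : ∃ g ∈ localFamilies P X, IsLUB (range f) g := by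
  choose C hC hCf using fun i => (hf i).1
  have hlub : ∀ x, IsLUB (range fun i => f i x) (aeClass P (⋃ i, C i x)) := fun x => by
    simpa only [hCf] using isLUB_aeClass_iUnion (P := P) fun i => C i x
  refine ⟨fun x => aeClass P (⋃ i, C i x), ⟨fun x => ⟨_, .iUnion fun i => hC i x, rfl⟩, ?_⟩, ?_⟩
  · intro x y D hD hxy
    rw [← aeClass_inter, inter_iUnion]
    refine (isLUB_aeClass_iUnion _).2 (forall_mem_range.2 fun i => ?_)
    rw [aeClass_inter, hCf]
    exact ((hf i).2 x y D hD hxy).trans ((hlub y).1 ⟨i, rfl⟩)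
  · refine isLUB_pi.2 fun x => ?_
    rw [← range_comp]
    exact hlub x

lemma exists_isGLB {ι : Type*} [Countable ι] {f : ι → X → Germ (ae P) Prop}
    (hf : ∀ i, f i ∈ localFamilies P X) : ∃ g ∈ localFamilies P X, IsGLB (range f) g := by
  obtain ⟨g, hg, hlub⟩ := exists_isLUB fun i => (localFamilies P X).compl_mem (hf i)
  refine ⟨gᶜ, (localFamilies P X).compl_mem hg, forall_mem_range.2 fun i => ?_, fun h hh => ?_⟩
  · exact compl_le_of_compl_le (hlub.1 ⟨i, rfl⟩)
  · exact le_compl_of_le_compl (hlub.2 (forall_mem_range.2 fun i => compl_le_compl (hh ⟨i, rfl⟩)))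

lemma le_apply_of_eq_on_disjointed (hf : f ∈ localFamilies P X) {A : Set Ω} {D : ℕ → Set Ω}
    (hD : ∀ k, MeasurableSet (D k)) (hAD : A ≤ᵐ[P] ⋃ k, D k)
    {x : ℕ → X} (hx : ∀ k, aeClass P (A ∩ D k) ≤ f (x k)) {z : X}
    (hz : ∀ k, ∀ ω ∈ disjointed D k, z.1 ω = (x k).1 ω) : aeClass P A ≤ f z := by
  have hcover : A ≤ᵐ[P] (⋃ k, disjointed D k ∩ (A ∩ D k) : Set Ω) := by
    filter_upwards [hAD] with ω hω hA
    obtain ⟨k, hk⟩ := mem_iUnion.1 (iUnion_disjointed (f := D) ▸ hω hA)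
    exact mem_iUnion_of_mem k ⟨hk, hA, disjointed_subset D k hk⟩
  calc aeClass P A
      ≤ aeClass P (⋃ k, disjointed D k ∩ (A ∩ D k)) := aeClass_le_aeClass.2 hcover
    _ ≤ f z := (isLUB_aeClass_iUnion _).2 <| forall_mem_range.2 fun k => by
        calc aeClass P (disjointed D k ∩ (A ∩ D k))
            ≤ aeClass P (disjointed D k) ⊓ f (x k) := inf_le_inf_left _ (hx k)
          _ ≤ f z := inf_le_of_eqOn hf (.disjointed hD k) (ae_of_all _ fun ω hω => (hz k ω hω).symm)

lemma exists_eq_on_disjointed (hf : f ∈ localFamilies P X) (hX : Stable P X) {D : ℕ → Set Ω}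
    (hD : ∀ k, MeasurableSet (D k)) {x : ℕ → X} (hx : ∀ k, aeClass P (D k) ≤ f (x k)) :
    ∃ z : X, (∀ k, ∀ ω ∈ disjointed D k, z.1 ω = (x k).1 ω) ∧ aeClass P (⋃ k, D k) ≤ f z := by
  obtain ⟨z, hzX, hz⟩ := hX.exists_eq_on_disjointed hD fun k => (x k).2
  exact ⟨⟨z, hzX⟩, hz, le_apply_of_eq_on_disjointed hf hD .rfl
    (fun k => (aeClass_mono inter_subset_right).trans (hx k)) hz⟩

/-- The essentially largest measurable set contained in a member of the family `f`. -/
def base (f : X → Germ (ae P) Prop) : Set Ω := largestSet P fun C => ∃ x, aeClass P C ≤ f x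

lemma base_spec [SFinite P] (hf : f ∈ localFamilies P X) (hX : Stable P X) :
    MeasurableSet (base f) ∧ (∃ x, aeClass P (base f) ≤ f x) ∧
      ∀ C, MeasurableSet C → (∃ x, aeClass P C ≤ f x) → C ≤ᵐ[P] base f := by
  refine IsSigmaUnionClosed.largestSet_spec ⟨?_, fun C hC h => ?_⟩
  · obtain ⟨x, hx⟩ := hX.1
    exact ⟨⟨x, hx⟩, aeClass_empty.trans_le bot_le⟩
  · choose x hx using h
    obtain ⟨z, -, hz⟩ := exists_eq_on_disjointed hf hX hC hx
    exact ⟨z, hz⟩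

/-- The conditional subset of `X` represented by the local family `f`: its carrier consists of the
elements of `X` at which `f` is essentially largest. -/
def toCond (f : X → Germ (ae P) Prop) : CondRaw Ω E :=
  ({x | ∃ hx : x ∈ X, aeClass P (base f) ≤ f ⟨x, hx⟩}, base f)

lemma isCond_toCond [SFinite P] (hf : f ∈ localFamilies P X) (hX : Stable P X) :
    IsCond P X (toCond f) := by
  obtain ⟨hbase, ⟨x₀, hx₀⟩, -⟩ := base_spec hf hX
  refine ⟨⟨⟨x₀, x₀.2, hx₀⟩, ?_, fun B x hx => ?_⟩, fun x hx => hx.1, hbase⟩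
  · rintro x ⟨hx, hfx⟩ y hxy
    have hy := hX.2.1 x hx y hxy
    have hle : f ⟨x, hx⟩ ≤ f ⟨y, hy⟩ := by
      simpa only [aeClass_univ, top_inf_eq] using
        inf_le_of_eqOn hf (x := ⟨x, hx⟩) (y := ⟨y, hy⟩) .univ (hxy.mono fun ω h _ => h)
    exact ⟨hy, hfx.trans hle⟩
  · choose hxX hfx using hx
    have hz := hX.2.2 B x hxX
    have hcover : base f ≤ᵐ[P] ⋃ k, B.part k :=
      (LE.le.eventuallyLE (subset_univ _)).trans (ae_le_set.2 (compl_eq_univ_sdiff _ ▸ B.cover))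
    exact ⟨hz, le_apply_of_eq_on_disjointed hf B.meas hcover (x := fun k => ⟨x k, hxX k⟩)
      (fun k => (aeClass_mono inter_subset_left).trans (hfx k))
      fun k ω hω => B.concat_apply_of_mem_disjointed x hω⟩

lemma memOn_toCond [SFinite P] (hf : f ∈ localFamilies P X) (hX : Stable P X) {x : X}
    {C : Set Ω} (hC : MeasurableSet C) (hx : aeClass P C ≤ f x) :
    memOn P C x (toCond f).1 := by
  obtain ⟨hbase, ⟨x₀, hx₀⟩, -⟩ := base_spec hf hX
  obtain ⟨z, hz, hfz⟩ := exists_eq_on_disjointed hf hX (D := fun | 0 => C | _ + 1 => base f)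
    (x := fun | 0 => x | _ + 1 => x₀) (by rintro (_ | _); exacts [hC, hbase])
    (by rintro (_ | _); exacts [hx, hx₀])
  refine ⟨z, ⟨z.2, (aeClass_mono ?_).trans hfz⟩, ae_of_all _ fun ω hω => (hz 0 ω ?_).symm⟩
  · exact subset_iUnion_of_subset 1 le_rfl
  · rwa [disjointed_zero]

end localFamilies

end LocalFamily

section Trace

variable {Ω E : Type*} {mΩ : MeasurableSpace Ω} {P : @Measure Ω mΩ} [SFinite P]
  {X : Set (Ω → E)} {S T : CondRaw Ω E}

lemma indBase_spec (hS : IsCond P X S) (x : Ω → E) :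
    MeasurableSet (indBase P S x) ∧ (P (indBase P S x \ S.2) = 0 ∧ memOn P (indBase P S x) x S.1) ∧
      ∀ C, MeasurableSet C → P (C \ S.2) = 0 ∧ memOn P C x S.1 → C ≤ᵐ[P] indBase P S x := by
  refine IsSigmaUnionClosed.largestSet_spec ⟨?_, fun C hC h => ⟨?_, ?_⟩⟩
  · obtain ⟨v, hv⟩ := hS.1.1
    exact ⟨by simp, v, hv, by simp⟩
  · rw [iUnion_sdiff]
    exact measure_iUnion_null fun k => (h k).1
  · exact hS.1.memOn_iUnion hC fun k => (h k).2

lemma measurableSet_indBase (hS : IsCond P X S) (x : Ω → E) : MeasurableSet (indBase P S x) :=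
  (indBase_spec hS x).1

lemma indBase_le (hS : IsCond P X S) (x : Ω → E) : indBase P S x ≤ᵐ[P] S.2 :=
  ae_le_set.2 (indBase_spec hS x).2.1.1

lemma memOn_indBase (hS : IsCond P X S) (x : Ω → E) : memOn P (indBase P S x) x S.1 :=
  (indBase_spec hS x).2.1.2

lemma le_indBase (hS : IsCond P X S) {x : Ω → E} {C : Set Ω} (hC : MeasurableSet C)
    (hCS : C ≤ᵐ[P] S.2) (hx : memOn P C x S.1) : C ≤ᵐ[P] indBase P S x :=
  (indBase_spec hS x).2.2 C hC ⟨ae_le_set.1 hCS, hx⟩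

lemma cle_iff_indBase_le (hS : IsCond P X S) (hT : IsCond P X T) :
    cle P S T ↔ ∀ x ∈ X, indBase P S x ≤ᵐ[P] indBase P T x := by
  constructor
  · rintro ⟨hbase, hval⟩ x -
    obtain ⟨v, hv, hxv⟩ := memOn_indBase hS x
    obtain ⟨w, hw, hvw⟩ := hval v hv
    refine le_indBase hT (measurableSet_indBase hS x)
      ((indBase_le hS x).trans (ae_le_set.2 hbase)) ⟨w, hw, ?_⟩
    filter_upwards [indBase_le hS x, hxv, hvw] with ω hS hxv hvw hω
    exact (hxv hω).trans (hvw (hS hω))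
  · intro h
    have hle : ∀ x ∈ S.1, S.2 ≤ᵐ[P] indBase P T x := fun x hx =>
      (le_indBase hS hS.2.2 .rfl ⟨x, hx, ae_of_all _ fun _ _ => rfl⟩).trans (h x (hS.2.1 hx))
    obtain ⟨x₀, hx₀⟩ := hS.1.1
    refine ⟨ae_le_set.1 ((hle x₀ hx₀).trans (indBase_le hT x₀)), fun x hx => ?_⟩
    obtain ⟨w, hw, hxw⟩ := memOn_indBase hT x
    refine ⟨w, hw, ?_⟩
    filter_upwards [hle x hx, hxw] with ω hle hxw hω using hxw (hle hω)

/-- The local family of a conditional set: its value at `x` is the class of the largest set on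
which `x` belongs to `S`, that is of the support of the stable indicator function of `S` at `x`. -/
def trace (P : @Measure Ω mΩ) (X : Set (Ω → E)) (S : CondRaw Ω E) : X → Germ (ae P) Prop :=
  fun x => aeClass P (indBase P S x)

lemma cle_iff_trace_le (hS : IsCond P X S) (hT : IsCond P X T) :
    cle P S T ↔ trace P X S ≤ trace P X T := by
  rw [cle_iff_indBase_le hS hT, Pi.le_def, Subtype.forall]
  rfl

lemma ceq_iff_trace_eq (hS : IsCond P X S) (hT : IsCond P X T) :
    ceq P S T ↔ trace P X S = trace P X T := by
  rw [ceq, cle_iff_trace_le hS hT, cle_iff_trace_le hT hS, le_antisymm_iff]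

lemma trace_mem_localFamilies (hS : IsCond P X S) : trace P X S ∈ localFamilies P X := by
  refine ⟨fun x => ⟨_, measurableSet_indBase hS x, rfl⟩, fun x y C hC hxy => ?_⟩
  obtain ⟨v, hv, hxv⟩ := memOn_indBase hS x
  refine le_indBase hS (hC.inter (measurableSet_indBase hS x)) ?_ ⟨v, hv, ?_⟩
  · exact (LE.le.eventuallyLE inter_subset_right).trans (indBase_le hS x)
  · filter_upwards [hxy, hxv] with ω hxy hxv hω
    exact (hxy hω.1).symm.trans (hxv hω.2)

lemma trace_toCond {f : X → Germ (ae P) Prop} (hf : f ∈ localFamilies P X) (hX : Stable P X) :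
    trace P X (localFamilies.toCond f) = f := by
  have hS := localFamilies.isCond_toCond hf hX
  funext x
  refine le_antisymm ?_ ?_
  · obtain ⟨v, ⟨hvX, hv⟩, hxv⟩ := memOn_indBase hS x.1
    calc aeClass P (indBase P (localFamilies.toCond f) x)
        ≤ aeClass P (indBase P (localFamilies.toCond f) x) ⊓ f ⟨v, hvX⟩ :=
          le_inf le_rfl ((aeClass_le_aeClass.2 (indBase_le hS x)).trans hv)
      _ ≤ f x := localFamilies.inf_le_of_eqOn hf (measurableSet_indBase hS x)
          (hxv.mono fun ω h hω => (h hω).symm)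
  · obtain ⟨C, hC, hCx⟩ := localFamilies.exists_aeClass_eq hf x
    rw [← hCx]
    exact le_indBase hS hC ((localFamilies.base_spec hf hX).2.2 C hC ⟨x, hCx.le⟩)
      (localFamilies.memOn_toCond hf hX hC hCx.le)

lemma trace_cbot (hX : Stable P X) : trace P X (cbot X) = ⊥ := by
  have hbot : IsCond P X (cbot X) := ⟨hX, subset_rfl, .empty⟩
  exact le_bot_iff.1 fun x => indBase_le hbot x

lemma isSupOf_toCond {s : Set (CondRaw Ω E)} {f : X → Germ (ae P) Prop} (hX : Stable P X)
    (hs : ∀ S ∈ s, IsCond P X S) (hf : f ∈ localFamilies P X) (h : IsLUB (trace P X '' s) f) :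
    IsSupOf P X s (localFamilies.toCond f) := by
  have hcond := localFamilies.isCond_toCond hf hX
  refine ⟨hcond, fun S hS => ?_, fun T hT hsT => ?_⟩
  · rw [cle_iff_trace_le (hs S hS) hcond, trace_toCond hf hX]
    exact h.1 (mem_image_of_mem _ hS)
  · rw [cle_iff_trace_le hcond hT, trace_toCond hf hX]
    exact h.2 (forall_mem_image.2 fun S hS => (cle_iff_trace_le (hs S hS) hT).1 (hsT S hS))

lemma isInfOf_toCond {s : Set (CondRaw Ω E)} {f : X → Germ (ae P) Prop} (hX : Stable P X)
    (hs : ∀ S ∈ s, IsCond P X S) (hf : f ∈ localFamilies P X) (h : IsGLB (trace P X '' s) f) :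
    IsInfOf P X s (localFamilies.toCond f) := by
  have hcond := localFamilies.isCond_toCond hf hX
  refine ⟨hcond, fun S hS => ?_, fun T hT hsT => ?_⟩
  · rw [cle_iff_trace_le hcond (hs S hS), trace_toCond hf hX]
    exact h.1 (mem_image_of_mem _ hS)
  · rw [cle_iff_trace_le hT hcond, trace_toCond hf hX]
    exact h.2 (forall_mem_image.2 fun S hS => (cle_iff_trace_le hT (hs S hS)).1 (hsT S hS))

lemma isCond_cSup_and_trace_eq {s : Set (CondRaw Ω E)} {f : X → Germ (ae P) Prop} (hX : Stable P X)
    (hs : ∀ S ∈ s, IsCond P X S) (hf : f ∈ localFamilies P X) (h : IsLUB (trace P X '' s) f) :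
    IsCond P X (cSup P X s) ∧ trace P X (cSup P X s) = f := by
  have hto := isSupOf_toCond hX hs hf h
  have hsup : IsSupOf P X s (cSup P X s) := by
    rw [cSup, dif_pos ⟨_, hto⟩]
    exact Exists.choose_spec ⟨_, hto⟩
  refine ⟨hsup.1, Eq.trans ((ceq_iff_trace_eq hsup.1 hto.1).1 ?_) (trace_toCond hf hX)⟩
  exact ⟨hsup.2.2 _ hto.1 hto.2.1, hto.2.2 _ hsup.1 hsup.2.1⟩

lemma isCond_cInf_and_trace_eq {s : Set (CondRaw Ω E)} {f : X → Germ (ae P) Prop} (hX : Stable P X)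
    (hs : ∀ S ∈ s, IsCond P X S) (hf : f ∈ localFamilies P X) (h : IsGLB (trace P X '' s) f) :
    IsCond P X (cInf P X s) ∧ trace P X (cInf P X s) = f := by
  have hto := isInfOf_toCond hX hs hf h
  have hinf : IsInfOf P X s (cInf P X s) := by
    rw [cInf, dif_pos ⟨_, hto⟩]
    exact Exists.choose_spec ⟨_, hto⟩
  refine ⟨hinf.1, Eq.trans ((ceq_iff_trace_eq hinf.1 hto.1).1 ?_) (trace_toCond hf hX)⟩
  exact ⟨hto.2.2 _ hinf.1 hinf.2.1, hinf.2.2 _ hto.1 hto.2.1⟩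

lemma isCond_cSupFam_and_isLUB {ι : Type*} [Countable ι] {S : ι → CondRaw Ω E} (hX : Stable P X)
    (hS : ∀ i, IsCond P X (S i)) : IsCond P X (cSupFam P X S) ∧
      IsLUB (range fun i => trace P X (S i)) (trace P X (cSupFam P X S)) := by
  obtain ⟨f, hf, h⟩ := localFamilies.exists_isLUB fun i => trace_mem_localFamilies (hS i)
  obtain ⟨hcond, htrace⟩ := isCond_cSup_and_trace_eq (s := range S) hX (forall_mem_range.2 hS) hf
    (by rwa [← range_comp])
  exact ⟨hcond, htrace.symm ▸ h⟩

lemma isCond_cInfFam_and_isGLB {ι : Type*} [Countable ι] {S : ι → CondRaw Ω E} (hX : Stable P X)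
    (hS : ∀ i, IsCond P X (S i)) : IsCond P X (cInfFam P X S) ∧
      IsGLB (range fun i => trace P X (S i)) (trace P X (cInfFam P X S)) := by
  obtain ⟨f, hf, h⟩ := localFamilies.exists_isGLB fun i => trace_mem_localFamilies (hS i)
  obtain ⟨hcond, htrace⟩ := isCond_cInf_and_trace_eq (s := range S) hX (forall_mem_range.2 hS) hf
    (by rwa [← range_comp])
  exact ⟨hcond, htrace.symm ▸ h⟩

lemma trace_cSup₂ (hX : Stable P X) (hS : IsCond P X S) (hT : IsCond P X T) :
    trace P X (cSup₂ P X S T) = trace P X S ⊔ trace P X T :=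
  (isCond_cSup_and_trace_eq hX (by simp [hS, hT])
    ((localFamilies P X).sup_mem (trace_mem_localFamilies hS) (trace_mem_localFamilies hT))
    (image_pair .. ▸ isLUB_pair)).2

lemma isCond_cInf₂_and_trace_eq (hX : Stable P X) (hS : IsCond P X S) (hT : IsCond P X T) :
    IsCond P X (cInf₂ P X S T) ∧ trace P X (cInf₂ P X S T) = trace P X S ⊓ trace P X T :=
  isCond_cInf_and_trace_eq hX (by simp [hS, hT])
    ((localFamilies P X).inf_mem (trace_mem_localFamilies hS) (trace_mem_localFamilies hT))
    (image_pair .. ▸ isGLB_pair)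

lemma cdisjoint_iff_disjoint_trace (hX : Stable P X) (hS : IsCond P X S) (hT : IsCond P X T) :
    cdisjoint P X S T ↔ Disjoint (trace P X S) (trace P X T) := by
  obtain ⟨hcond, htrace⟩ := isCond_cInf₂_and_trace_eq hX hS hT
  rw [cdisjoint, ceq_iff_trace_eq hcond ⟨hX, subset_rfl, .empty⟩, htrace, trace_cbot hX,
    disjoint_iff]

lemma isCond_ccompl_and_trace_eq (hX : Stable P X) (hS : IsCond P X S) :
    IsCond P X (ccompl P X S) ∧ trace P X (ccompl P X S) = (trace P X S)ᶜ := by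
  have hf := (localFamilies P X).compl_mem (trace_mem_localFamilies hS)
  have hcond := localFamilies.isCond_toCond hf hX
  have htrace := trace_toCond hf hX
  refine isCond_cSup_and_trace_eq hX (fun T hT => hT.1) hf (IsGreatest.isLUB ⟨?_, ?_⟩)
  · refine ⟨_, ⟨hcond, (cdisjoint_iff_disjoint_trace hX hcond hS).2 ?_⟩, htrace⟩
    rw [htrace]
    exact disjoint_compl_left
  · rintro _ ⟨T, ⟨hT, hTS⟩, rfl⟩
    exact ((cdisjoint_iff_disjoint_trace hX hT hS).1 hTS).le_compl_right

lemma trace_cInf₂_ccompl (hX : Stable P X) (hS : IsCond P X S) (hT : IsCond P X T) :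
    trace P X (cInf₂ P X S (ccompl P X T)) = trace P X S \ trace P X T := by
  obtain ⟨hcond, htrace⟩ := isCond_ccompl_and_trace_eq hX hT
  rw [(isCond_cInf₂_and_trace_eq hX hS hcond).2, htrace]
  exact sdiff_eq.symm

end Trace

section CondRing

open scoped Function

variable {Ω E : Type*} {mΩ : MeasurableSpace Ω} {P : @Measure Ω mΩ} {X : Set (Ω → E)}
  {𝒳 : Set (CondRaw Ω E)} {μ : CondRaw Ω E → Ω → ℝ≥0∞} {S T : CondRaw Ω E}

/-- A ring of conditional subsets of `X`, that is a stable ring but for the closedness under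
countable concatenations. -/
structure IsCondRing (P : @Measure Ω mΩ) (X : Set (Ω → E)) (𝒳 : Set (CondRaw Ω E)) : Prop where
  isCond : ∀ S ∈ 𝒳, IsCond P X S
  mem_of_ceq : ∀ S ∈ 𝒳, ∀ T, IsCond P X T → ceq P S T → T ∈ 𝒳
  diff_mem : ∀ S ∈ 𝒳, ∀ T ∈ 𝒳, cInf₂ P X S (ccompl P X T) ∈ 𝒳
  sup_mem : ∀ S ∈ 𝒳, ∀ T ∈ 𝒳, cSup₂ P X S T ∈ 𝒳

lemma IsStableRing.isCondRing (h : IsStableRing P X 𝒳) : IsCondRing P X 𝒳 where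
  isCond := h.1.2.1
  mem_of_ceq := h.1.2.2.1
  diff_mem S hS T hT := (h.2 S hS T hT).1
  sup_mem S hS T hT := (h.2 S hS T hT).2

lemma cSupFam_pair : cSupFam P X ![S, T] = cSup₂ P X S T := by
  simp [cSupFam, cSup₂, Matrix.range_cons, pair_comm]

variable [SFinite P] {m : (X → Germ (ae P) Prop) → Ω → ℝ≥0∞}

lemma IsCondRing.isBoolRing_trace_image (hX : Stable P X) (h𝒳 : IsCondRing P X 𝒳) :
    IsBoolRing (trace P X '' 𝒳) where
  sup_mem := by
    rintro _ _ ⟨S, hS, rfl⟩ ⟨T, hT, rfl⟩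
    exact ⟨_, h𝒳.sup_mem S hS T hT, trace_cSup₂ hX (h𝒳.isCond S hS) (h𝒳.isCond T hT)⟩
  sdiff_mem := by
    rintro _ _ ⟨S, hS, rfl⟩ ⟨T, hT, rfl⟩
    exact ⟨_, h𝒳.diff_mem S hS T hT, trace_cInf₂_ccompl hX (h𝒳.isCond S hS) (h𝒳.isCond T hT)⟩

lemma IsCondRing.mem_of_trace_mem (h𝒳 : IsCondRing P X 𝒳) (hS : IsCond P X S)
    (h : trace P X S ∈ trace P X '' 𝒳) : S ∈ 𝒳 := by
  obtain ⟨T, hT, hTS⟩ := h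
  exact h𝒳.mem_of_ceq T hT S hS ((ceq_iff_trace_eq (h𝒳.isCond T hT) hS).2 hTS)

lemma IsCondRing.inf_mem (hX : Stable P X) (h𝒳 : IsCondRing P X 𝒳) (hS : S ∈ 𝒳) (hT : T ∈ 𝒳) :
    cInf₂ P X S T ∈ 𝒳 := by
  obtain ⟨hcond, htrace⟩ := isCond_cInf₂_and_trace_eq hX (h𝒳.isCond S hS) (h𝒳.isCond T hT)
  refine h𝒳.mem_of_trace_mem hcond ?_
  rw [htrace]
  exact (h𝒳.isBoolRing_trace_image hX).inf_mem (mem_image_of_mem _ hS) (mem_image_of_mem _ hT)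

lemma IsCondRing.exists_comp_trace_ae_eq (h𝒳 : IsCondRing P X 𝒳)
    (hμ : ∀ S ∈ 𝒳, ∀ T ∈ 𝒳, ceq P S T → μ S =ᵐ[P] μ T) :
    ∃ m : (X → Germ (ae P) Prop) → Ω → ℝ≥0∞, ∀ S ∈ 𝒳, m (trace P X S) =ᵐ[P] μ S := by
  refine ⟨fun f => μ (Function.invFunOn (trace P X) 𝒳 f), fun S hS => ?_⟩
  have hinv := mem_image_of_mem (trace P X) hS
  have hmem := Function.invFunOn_mem hinv
  exact hμ _ hmem S hS ((ceq_iff_trace_eq (h𝒳.isCond _ hmem) (h𝒳.isCond S hS)).2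
    (Function.invFunOn_eq hinv))

lemma IsCondRing.isContentOn_trace (hX : Stable P X) (h𝒳 : IsCondRing P X 𝒳)
    (hm : ∀ S ∈ 𝒳, m (trace P X S) =ᵐ[P] μ S) (hadd : FinAdd P X 𝒳 μ) :
    IsContentOn (ae P) (trace P X '' 𝒳) m := by
  rintro _ ⟨S, hS, rfl⟩ _ ⟨T, hT, rfl⟩ hdisj
  have hcond := h𝒳.isCond
  have hsup := h𝒳.sup_mem S hS T hT
  have hpair : ∀ i j : Fin 2, i ≠ j → cdisjoint P X (![S, T] i) (![S, T] j) := by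
    intro i j hij
    fin_cases i <;> fin_cases j
    exacts [(hij rfl).elim, (cdisjoint_iff_disjoint_trace hX (hcond S hS) (hcond T hT)).2 hdisj,
      (cdisjoint_iff_disjoint_trace hX (hcond T hT) (hcond S hS)).2 hdisj.symm, (hij rfl).elim]
  have hμ := hadd 2 ![S, T] (Fin.forall_fin_two.2 ⟨hS, hT⟩) hpair (cSupFam_pair ▸ hsup)
  rw [cSupFam_pair] at hμ
  rw [← trace_cSup₂ hX (hcond S hS) (hcond T hT)]
  filter_upwards [hμ, hm _ hsup, hm S hS, hm T hT] with ω hω hsupω hSω hTω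
  simpa [Fin.sum_univ_two, hsupω, hSω, hTω] using hω

/-- The common form of (M2), (M7) and (M8): `c` is a limit operation on sequences of conditional
sets, corresponding to the relation `L` between traces. -/
lemma IsCondRing.forall_seq_iff_trace (h𝒳 : IsCondRing P X 𝒳)
    (hm : ∀ S ∈ 𝒳, m (trace P X S) =ᵐ[P] μ S) {c : (ℕ → CondRaw Ω E) → CondRaw Ω E}
    {L : (ℕ → X → Germ (ae P) Prop) → (X → Germ (ae P) Prop) → Prop}
    (hc : ∀ S, (∀ k, S k ∈ 𝒳) → IsCond P X (c S) ∧
      ∀ a, L (fun k => trace P X (S k)) a ↔ trace P X (c S) = a)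
    {p : (ℕ → X → Germ (ae P) Prop) → Prop} {F : (ℕ → ℝ≥0∞) → ℝ≥0∞} :
    (∀ S : ℕ → CondRaw Ω E, (∀ k, S k ∈ 𝒳) → p (fun k => trace P X (S k)) → c S ∈ 𝒳 →
        μ (c S) =ᵐ[P] fun ω => F fun k => μ (S k) ω) ↔
      ∀ s : ℕ → X → Germ (ae P) Prop, (∀ k, s k ∈ trace P X '' 𝒳) → p s →
        ∀ a ∈ trace P X '' 𝒳, L s a → m a =ᵐ[P] fun ω => F fun k => m (s k) ω := by
  have hseq : ∀ S : ℕ → CondRaw Ω E, (∀ k, S k ∈ 𝒳) →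
      (fun ω => F fun k => m (trace P X (S k)) ω) =ᵐ[P] fun ω => F fun k => μ (S k) ω := by
    intro S hS
    filter_upwards [ae_all_iff.2 fun k => hm (S k) (hS k)] with ω hω
    simp only [hω]
  constructor
  · intro h s hs hp a ha hL
    choose S hS hSs using hs
    obtain rfl : (fun k => trace P X (S k)) = s := funext hSs
    obtain ⟨hcond, hlim⟩ := hc S hS
    obtain rfl := (hlim a).1 hL
    have hmem := h𝒳.mem_of_trace_mem hcond ha
    exact (hm _ hmem).trans ((h S hS hp hmem).trans (hseq S hS).symm)
  · intro h S hS hp hmem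
    have hlim := h _ (fun k => mem_image_of_mem _ (hS k)) hp _ (mem_image_of_mem _ hmem)
      (((hc S hS).2 _).2 rfl)
    exact (hm _ hmem).symm.trans (hlim.trans (hseq S hS))

lemma IsCondRing.forall_cSupFam_iff_trace (hX : Stable P X) (h𝒳 : IsCondRing P X 𝒳)
    (hm : ∀ S ∈ 𝒳, m (trace P X S) =ᵐ[P] μ S) {p : (ℕ → X → Germ (ae P) Prop) → Prop}
    {F : (ℕ → ℝ≥0∞) → ℝ≥0∞} :
    (∀ S : ℕ → CondRaw Ω E, (∀ k, S k ∈ 𝒳) → p (fun k => trace P X (S k)) →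
        cSupFam P X S ∈ 𝒳 → μ (cSupFam P X S) =ᵐ[P] fun ω => F fun k => μ (S k) ω) ↔
      ∀ s : ℕ → X → Germ (ae P) Prop, (∀ k, s k ∈ trace P X '' 𝒳) → p s →
        ∀ a ∈ trace P X '' 𝒳, IsLUB (range s) a → m a =ᵐ[P] fun ω => F fun k => m (s k) ω :=
  h𝒳.forall_seq_iff_trace hm (L := fun s a => IsLUB (range s) a) fun _ hS =>
    have h := isCond_cSupFam_and_isLUB hX fun k => h𝒳.isCond _ (hS k)
    ⟨h.1, fun _ => ⟨h.2.unique, fun ha => ha ▸ h.2⟩⟩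

lemma IsCondRing.m2_iff_countablyAdditiveOn (hX : Stable P X) (h𝒳 : IsCondRing P X 𝒳)
    (hm : ∀ S ∈ 𝒳, m (trace P X S) =ᵐ[P] μ S) :
    M2 P X 𝒳 μ ↔ CountablyAdditiveOn (ae P) (trace P X '' 𝒳) m := by
  refine Iff.trans ?_ (h𝒳.forall_cSupFam_iff_trace hX hm (p := fun s => Pairwise (Disjoint on s))
    (F := fun u => ∑' k, u k))
  refine forall₂_congr fun S hS => imp_congr_left (forall₃_congr fun i j _ => ?_)
  exact cdisjoint_iff_disjoint_trace hX (h𝒳.isCond _ (hS i)) (h𝒳.isCond _ (hS j))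

lemma IsCondRing.forall_cSupFam_iff_continuousFromBelowOn (hX : Stable P X)
    (h𝒳 : IsCondRing P X 𝒳) (hm : ∀ S ∈ 𝒳, m (trace P X S) =ᵐ[P] μ S) :
    (∀ S : ℕ → CondRaw Ω E, (∀ k, S k ∈ 𝒳) → (∀ k, cle P (S k) (S (k + 1))) →
        cSupFam P X S ∈ 𝒳 → μ (cSupFam P X S) =ᵐ[P] fun ω => ⨆ k, μ (S k) ω) ↔
      ContinuousFromBelowOn (ae P) (trace P X '' 𝒳) m := by
  refine Iff.trans ?_ (h𝒳.forall_cSupFam_iff_trace hX hm (p := Monotone) (F := iSup))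
  refine forall₂_congr fun S hS => imp_congr_left ?_
  have hstep : ∀ k, cle P (S k) (S (k + 1)) ↔ trace P X (S k) ≤ trace P X (S (k + 1)) := fun k =>
    cle_iff_trace_le (h𝒳.isCond _ (hS k)) (h𝒳.isCond _ (hS (k + 1)))
  simp only [hstep]
  exact ⟨monotone_nat_of_le_succ, fun h k => h k.le_succ⟩

lemma IsCondRing.forall_cInfFam_iff_continuousFromAboveOn (hX : Stable P X)
    (h𝒳 : IsCondRing P X 𝒳) (hm : ∀ S ∈ 𝒳, m (trace P X S) =ᵐ[P] μ S) :
    (∀ S : ℕ → CondRaw Ω E, (∀ k, S k ∈ 𝒳) → (∀ k, cle P (S (k + 1)) (S k)) →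
        cInfFam P X S ∈ 𝒳 → μ (cInfFam P X S) =ᵐ[P] fun ω => ⨅ k, μ (S k) ω) ↔
      ContinuousFromAboveOn (ae P) (trace P X '' 𝒳) m := by
  refine Iff.trans ?_ (h𝒳.forall_seq_iff_trace hm (c := cInfFam P X)
    (L := fun s a => IsGLB (range s) a) (p := Antitone) (F := iInf) fun S hS => ?_)
  · refine forall₂_congr fun S hS => imp_congr_left ?_
    have hstep : ∀ k, cle P (S (k + 1)) (S k) ↔ trace P X (S (k + 1)) ≤ trace P X (S k) := fun k =>
      cle_iff_trace_le (h𝒳.isCond _ (hS (k + 1))) (h𝒳.isCond _ (hS k))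
    simp only [hstep]
    exact ⟨fun h => antitone_nat_of_succ_le h, fun h k => h k.le_succ⟩
  · have h := isCond_cInfFam_and_isGLB hX fun k => h𝒳.isCond _ (hS k)
    exact ⟨h.1, fun _ => ⟨h.2.unique, fun ha => ha ▸ h.2⟩⟩

lemma IsCondRing.sup_add_inf_ae_eq (hX : Stable P X) (h𝒳 : IsCondRing P X 𝒳)
    (hm : ∀ S ∈ 𝒳, m (trace P X S) =ᵐ[P] μ S) (hc : IsContentOn (ae P) (trace P X '' 𝒳) m)
    (hS : S ∈ 𝒳) (hT : T ∈ 𝒳) : μ (cSup₂ P X S T) + μ (cInf₂ P X S T) =ᵐ[P] μ S + μ T := by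
  have hSc := h𝒳.isCond S hS
  have hTc := h𝒳.isCond T hT
  have h := hc.sup_add_inf (h𝒳.isBoolRing_trace_image hX) (mem_image_of_mem _ hS)
    (mem_image_of_mem _ hT)
  rw [← trace_cSup₂ hX hSc hTc, ← (isCond_cInf₂_and_trace_eq hX hSc hTc).2] at h
  calc μ (cSup₂ P X S T) + μ (cInf₂ P X S T)
      =ᵐ[P] m (trace P X (cSup₂ P X S T)) + m (trace P X (cInf₂ P X S T)) :=
        ((hm _ (h𝒳.sup_mem S hS T hT)).add (hm _ (h𝒳.inf_mem hX hS hT))).symm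
    _ =ᵐ[P] m (trace P X S) + m (trace P X T) := h
    _ =ᵐ[P] μ S + μ T := (hm S hS).add (hm T hT)

lemma IsCondRing.ae_le_of_cle (hX : Stable P X) (h𝒳 : IsCondRing P X 𝒳)
    (hm : ∀ S ∈ 𝒳, m (trace P X S) =ᵐ[P] μ S) (hc : IsContentOn (ae P) (trace P X '' 𝒳) m)
    (hS : S ∈ 𝒳) (hT : T ∈ 𝒳) (hST : cle P S T) : μ S ≤ᵐ[P] μ T :=
  have h := hc.mono (h𝒳.isBoolRing_trace_image hX) (mem_image_of_mem _ hS) (mem_image_of_mem _ hT)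
    ((cle_iff_trace_le (h𝒳.isCond S hS) (h𝒳.isCond T hT)).1 hST)
  (hm S hS).symm.trans_le (h.trans_eq (hm T hT))

lemma IsCondRing.diff_ae_eq (hX : Stable P X) (h𝒳 : IsCondRing P X 𝒳)
    (hm : ∀ S ∈ 𝒳, m (trace P X S) =ᵐ[P] μ S) (hc : IsContentOn (ae P) (trace P X '' 𝒳) m)
    (hS : S ∈ 𝒳) (hT : T ∈ 𝒳) (hST : cle P S T) (hfin : ∀ᵐ ω ∂P, μ S ω < ∞) :
    μ (cInf₂ P X T (ccompl P X S)) =ᵐ[P] μ T - μ S := by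
  have hSc := h𝒳.isCond S hS
  have hTc := h𝒳.isCond T hT
  have hmfin : ∀ᵐ ω ∂P, m (trace P X S) ω < ∞ := by
    filter_upwards [hm S hS, hfin] with ω hω hfinω using hω.trans_lt hfinω
  have h := hc.sdiff (h𝒳.isBoolRing_trace_image hX) (mem_image_of_mem _ hS) (mem_image_of_mem _ hT)
    ((cle_iff_trace_le hSc hTc).1 hST) hmfin
  rw [← trace_cInf₂_ccompl hX hTc hSc] at h
  exact (hm _ (h𝒳.diff_mem T hT S hS)).symm.trans (h.trans ((hm T hT).sub (hm S hS)))

lemma IsCondRing.cSupFam_ae_le_tsum (hX : Stable P X) (h𝒳 : IsCondRing P X 𝒳)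
    (hm : ∀ S ∈ 𝒳, m (trace P X S) =ᵐ[P] μ S) (hc : IsContentOn (ae P) (trace P X '' 𝒳) m)
    (hM2 : M2 P X 𝒳 μ) {S : ℕ → CondRaw Ω E} (hS : ∀ k, S k ∈ 𝒳) (hsup : cSupFam P X S ∈ 𝒳) :
    μ (cSupFam P X S) ≤ᵐ[P] fun ω => ∑' k, μ (S k) ω := by
  have h := hc.le_tsum_of_isLUB (h𝒳.isBoolRing_trace_image hX)
    ((h𝒳.m2_iff_countablyAdditiveOn hX hm).1 hM2) (fun k => mem_image_of_mem _ (hS k))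
    (mem_image_of_mem _ hsup) (isCond_cSupFam_and_isLUB hX fun k => h𝒳.isCond _ (hS k)).2
  filter_upwards [h, hm _ hsup, ae_all_iff.2 fun k => hm _ (hS k)] with ω hω hsupω hSω
  simpa only [hsupω, hSω] using hω

end CondRing

theorem stable_premeasure_props_general
    {Ω E : Type*} {mΩ : MeasurableSpace Ω} (P : @Measure Ω mΩ) [SFinite P] (X : Set (Ω → E))
    (hX : Stable P X) (𝒳 : Set (CondRaw Ω E)) (h𝒳 : IsCondRing P X 𝒳)
    (μ : CondRaw Ω E → Ω → ℝ≥0∞) (hμ : ∀ S ∈ 𝒳, ∀ T ∈ 𝒳, ceq P S T → μ S =ᵐ[P] μ T)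
    (hadd : FinAdd P X 𝒳 μ) :
    (∀ S ∈ 𝒳, ∀ T ∈ 𝒳,
      (fun ω => μ (cSup₂ P X S T) ω + μ (cInf₂ P X S T) ω) =ᵐ[P] fun ω => μ S ω + μ T ω) ∧
    (∀ S ∈ 𝒳, ∀ T ∈ 𝒳, cle P S T → ∀ᵐ ω ∂P, μ S ω ≤ μ T ω) ∧
    (∀ S ∈ 𝒳, ∀ T ∈ 𝒳, cle P S T → (∀ᵐ ω ∂P, μ S ω < ∞) →
      μ (cInf₂ P X T (ccompl P X S)) =ᵐ[P] fun ω => μ T ω - μ S ω) ∧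
    (M2 P X 𝒳 μ →
      ∀ S : ℕ → CondRaw Ω E, (∀ k, S k ∈ 𝒳) → cSupFam P X S ∈ 𝒳 →
        ∀ᵐ ω ∂P, μ (cSupFam P X S) ω ≤ ∑' k, μ (S k) ω) ∧
    (M2 P X 𝒳 μ ↔
      ∀ S : ℕ → CondRaw Ω E, (∀ k, S k ∈ 𝒳) → (∀ k, cle P (S k) (S (k + 1))) →
        cSupFam P X S ∈ 𝒳 → μ (cSupFam P X S) =ᵐ[P] fun ω => ⨆ k, μ (S k) ω) ∧
    ((∀ S ∈ 𝒳, ∀ᵐ ω ∂P, μ S ω < ∞) →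
      (M2 P X 𝒳 μ ↔
        ∀ S : ℕ → CondRaw Ω E, (∀ k, S k ∈ 𝒳) → (∀ k, cle P (S (k + 1)) (S k)) →
          cInfFam P X S ∈ 𝒳 → μ (cInfFam P X S) =ᵐ[P] fun ω => ⨅ k, μ (S k) ω)) := by
  obtain ⟨m, hm⟩ := h𝒳.exists_comp_trace_ae_eq hμ
  have hR := h𝒳.isBoolRing_trace_image hX
  have hc := h𝒳.isContentOn_trace hX hm hadd
  have hM2 := h𝒳.m2_iff_countablyAdditiveOn hX hm
  refine ⟨fun S hS T hT => h𝒳.sup_add_inf_ae_eq hX hm hc hS hT,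
    fun S hS T hT => h𝒳.ae_le_of_cle hX hm hc hS hT,
    fun S hS T hT => h𝒳.diff_ae_eq hX hm hc hS hT,
    fun h S hS => h𝒳.cSupFam_ae_le_tsum hX hm hc h hS, ?_, fun hfin => ?_⟩
  · rw [hM2, h𝒳.forall_cSupFam_iff_continuousFromBelowOn hX hm]
    exact hc.countablyAdditiveOn_iff_continuousFromBelowOn hR
  · rw [hM2, h𝒳.forall_cInfFam_iff_continuousFromAboveOn hX hm]
    refine hc.countablyAdditiveOn_iff_continuousFromAboveOn hR (forall_mem_image.2 fun S hS => ?_)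
    filter_upwards [hm S hS, hfin S hS] with ω hω hfinω using hω.trans_lt hfinω

/-- **Proposition 3.8 (M3)–(M8).**  Elementary properties of stable set functions
on a stable ring `𝒳` satisfying (M1) and finite additivity:

* (M3) `μ(V|A ⊔ W|B) + μ(V|A ⊓ W|B) = μ(V|A) + μ(W|B)`;
* (M4) monotonicity with respect to conditional inclusion;
* (M5) `μ(W|B ⊓ (V|A)^⊏) = μ(W|B) − μ(V|A)` when `V|A ⊑ W|B` and `μ(V|A) < ∞`;
* (M6) countable subadditivity for stable pre-measures;
* (M7) `μ` is a stable pre-measure iff it is continuous from below;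
* (M8) if `μ` is finite-valued, `μ` is a stable pre-measure iff it is continuous
  from above. -/
theorem stable_premeasure_props
    {Ω E : Type*} {mΩ : MeasurableSpace Ω} (P : @Measure Ω mΩ)
    [IsProbabilityMeasure P] (X : Set (Ω → E)) (hX : Stable P X)
    (𝒳 : Set (CondRaw Ω E)) (hring : IsStableRing P X 𝒳)
    (μ : CondRaw Ω E → Ω → ℝ≥0∞) (hsf : IsStableSetFun P 𝒳 μ)
    (hM1 : M1 P 𝒳 μ) (hadd : FinAdd P X 𝒳 μ) :
    -- (M3)
    (∀ S ∈ 𝒳, ∀ T ∈ 𝒳,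
      (fun ω => μ (cSup₂ P X S T) ω + μ (cInf₂ P X S T) ω) =ᵐ[P]
        fun ω => μ S ω + μ T ω) ∧
    -- (M4)
    (∀ S ∈ 𝒳, ∀ T ∈ 𝒳, cle P S T → ∀ᵐ ω ∂P, μ S ω ≤ μ T ω) ∧
    -- (M5)
    (∀ S ∈ 𝒳, ∀ T ∈ 𝒳, cle P S T → (∀ᵐ ω ∂P, μ S ω < ∞) →
      μ (cInf₂ P X T (ccompl P X S)) =ᵐ[P] fun ω => μ T ω - μ S ω) ∧
    -- (M6)
    (M2 P X 𝒳 μ →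
      ∀ S : ℕ → CondRaw Ω E, (∀ k, S k ∈ 𝒳) → cSupFam P X S ∈ 𝒳 →
        ∀ᵐ ω ∂P, μ (cSupFam P X S) ω ≤ ∑' k, μ (S k) ω) ∧
    -- (M7)
    (M2 P X 𝒳 μ ↔
      ∀ S : ℕ → CondRaw Ω E, (∀ k, S k ∈ 𝒳) → (∀ k, cle P (S k) (S (k + 1))) →
        cSupFam P X S ∈ 𝒳 →
        μ (cSupFam P X S) =ᵐ[P] fun ω => ⨆ k, μ (S k) ω) ∧
    -- (M8)
    ((∀ S ∈ 𝒳, ∀ᵐ ω ∂P, μ S ω < ∞) →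
      (M2 P X 𝒳 μ ↔
        ∀ S : ℕ → CondRaw Ω E, (∀ k, S k ∈ 𝒳) → (∀ k, cle P (S (k + 1)) (S k)) →
          cInfFam P X S ∈ 𝒳 →
          μ (cInfFam P X S) =ᵐ[P] fun ω => ⨅ k, μ (S k) ω)) := by
  exact stable_premeasure_props_general P X hX 𝒳 hring.isCondRing μ hsf.2.1 hadd

end CondMT
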